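/- For all real numbers β with 0 < β < 1 and λ > 0 there exists a constant C > 0, depending only on n, p, α, β, λ, C₁ and C₂, with the following property: if u is a nonnegative C¹ solution of div A(x,Du) + b(x)|Du|^α ≥ q(x)g(u) in ℝⁿ and 0 < r₁ < r₂ are real numbers such that M(r₂;u) > M(r₁;u) ≥ β·M(r₂;u) and (M(r₂;u) − M(r₁;u))^{α−p+1}·(r₂ − r₁)^{p−α}·ess sup_{r₁<|x|<r₂} b(x) ≥ λ, then (M(r₂;u) − M(r₁;u))^α·ess sup_{r₁<|x|<r₂} b(x) ≥ C·(r₂ − r₁)^α·(ess inf_{r₁<|x|<r₂} q(x))·inf_{t∈(β·M(r₁;u), M(r₂;u))} g(t). -/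

import Mathlib

open MeasureTheory Metric Set Filter
open scoped RealInnerProductSpace ENNReal

noncomputable section

abbrev Euc (n : ℕ) := EuclideanSpace ℝ (Fin n)

/-- Weak solution of `div A(x,Dv) + b(x)|Dv|^α ≥ a(x)` on an open set `U`:
for every nonnegative test function `φ ∈ C₀^∞(U)`,
`-∫ A(x,Dv)·Dφ + ∫ b |Dv|^α φ ≥ ∫ a φ`. -/
def IsWeakSol {n : ℕ} (A : Euc n → Euc n → Euc n) (b : Euc n → ℝ) (α : ℝ)
    (a : Euc n → ℝ) (U : Set (Euc n)) (v : Euc n → ℝ) : Prop :=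
  ∀ φ : Euc n → ℝ, ContDiff ℝ (⊤ : ℕ∞) φ → HasCompactSupport φ → tsupport φ ⊆ U →
    (∀ x, 0 ≤ φ x) →
    (∫ x in U, a x * φ x) ≤
      (-(∫ x in U, ⟪A x (gradient v x), gradient φ x⟫)) +
        ∫ x in U, b x * ‖gradient v x‖ ^ α * φ x

/-- Structural conditions on `A`: measurability, coercivity and growth. -/
def StructCond {n : ℕ} (A : Euc n → Euc n → Euc n) (p C₁ C₂ : ℝ) : Prop :=
  Measurable (Function.uncurry A) ∧
    ∀ x ζ : Euc n, C₁ * ‖ζ‖ ^ p ≤ ⟪ζ, A x ζ⟫ ∧ ‖A x ζ‖ ≤ C₂ * ‖ζ‖ ^ (p - 1)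

/-- Locally bounded function on `ℝⁿ`. -/
def LocBdd {n : ℕ} (b : Euc n → ℝ) : Prop :=
  ∀ K : Set (Euc n), IsCompact K → ∃ C, ∀ x ∈ K, b x ≤ C

/-- `M(r; u) = max_{|x| = r} u x`. -/
def sphMax {n : ℕ} (u : Euc n → ℝ) (r : ℝ) : ℝ := sSup (u '' Metric.sphere (0 : Euc n) r)

/-- `g_θ(t) = inf_{s ∈ (t/θ, θ t)} g s`. -/
def ginf (g : ℝ → ℝ) (θ t : ℝ) : ℝ := sInf (g '' Set.Ioo (t / θ) (θ * t))

/-- The open annulus `{x : r₁ < |x| < r₂}`. -/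
def Ann (n : ℕ) (r₁ r₂ : ℝ) : Set (Euc n) := {x : Euc n | r₁ < ‖x‖ ∧ ‖x‖ < r₂}

/-- `q_σ(r) = ess inf_{r/σ < |x| < σ r} q x`. -/
def qinf {n : ℕ} (q : Euc n → ℝ) (σ r : ℝ) : ℝ :=
  essInf q (volume.restrict (Ann n (r / σ) (σ * r)))

/-- `f_σ(r) = q_σ(r) / (1 + r q_σ(r)^{(α-p+1)/α} ess sup_{r/σ<|x|<σr} b^{(p-1)/α})`. -/
def fdef {n : ℕ} (q b : Euc n → ℝ) (p α σ r : ℝ) : ℝ :=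
  qinf q σ r /
    (1 + r * qinf q σ r ^ ((α - p + 1) / α) *
      essSup (fun x => b x ^ ((p - 1) / α)) (volume.restrict (Ann n (r / σ) (σ * r))))


open scoped Topology Convolution

lemma hasDerivAt_posPow {s : ℝ} (hs : 1 < s) (t : ℝ) :
    HasDerivAt (fun t : ℝ => (max t 0) ^ s) (s * (max t 0) ^ (s - 1)) t := by
  rcases lt_trichotomy t 0 with h | h | h
  · have h1 : (fun t : ℝ => (max t 0) ^ s) =ᶠ[𝓝 t] fun _ => (0:ℝ) := by
      filter_upwards [eventually_lt_nhds h] with y hy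
      rw [max_eq_right hy.le, Real.zero_rpow (by linarith)]
    rw [max_eq_right h.le, Real.zero_rpow (by linarith), mul_zero]
    exact (hasDerivAt_const t (0:ℝ)).congr_of_eventuallyEq h1
  · subst h
    rw [max_self, Real.zero_rpow (by linarith : s - 1 ≠ 0), mul_zero]
    rw [hasDerivAt_iff_isLittleO_nhds_zero]
    have h1 := (Real.hasDerivAt_rpow_const (x := 0) (p := s) (Or.inr hs.le))
    rw [Real.zero_rpow (by linarith : s - 1 ≠ 0), mul_zero, hasDerivAt_iff_isLittleO_nhds_zero] at h1
    simp only [zero_add, max_self, smul_zero, sub_zero, Real.zero_rpow (by linarith : s ≠ 0)] at h1 ⊢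
    refine Asymptotics.IsLittleO.of_bound fun c hc => ?_
    filter_upwards [h1.bound hc] with y hy
    rcases le_total y 0 with h0 | h0
    · rw [max_eq_right h0, Real.zero_rpow (by linarith)]; simp; positivity
    · rw [max_eq_left h0]; exact hy
  · have h1 : (fun t : ℝ => (max t 0) ^ s) =ᶠ[𝓝 t] fun t => t ^ s := by
      filter_upwards [eventually_gt_nhds h] with y hy
      rw [max_eq_left hy.le]
    rw [max_eq_left h.le]
    exact (Real.hasDerivAt_rpow_const (Or.inr hs.le)).congr_of_eventuallyEq h1

lemma contDiff_posPow {s : ℝ} (hs : 1 < s) : ContDiff ℝ 1 (fun t : ℝ => (max t 0) ^ s) := by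
  rw [contDiff_one_iff_deriv]
  refine ⟨fun t => (hasDerivAt_posPow hs t).differentiableAt, ?_⟩
  have : deriv (fun t : ℝ => (max t 0) ^ s) = fun t => s * (max t 0) ^ (s - 1) :=
    funext fun t => (hasDerivAt_posPow hs t).deriv
  rw [this]
  refine continuous_const.mul ?_
  exact (continuous_id.max continuous_const).rpow_const (fun x => Or.inr (by linarith))

/-- truncated power of the positive part, cut off outside a ball -/
def cutPow {n : ℕ} (U : Euc n → ℝ) (x₀ : Euc n) (R k s : ℝ) : Euc n → ℝ :=
  (ball x₀ R).indicator (fun x => (max (U x - k) 0) ^ s)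

lemma cutPow_nonneg {n : ℕ} (U : Euc n → ℝ) (x₀ : Euc n) (R k s : ℝ) (x) :
    0 ≤ cutPow U x₀ R k s x :=
  indicator_nonneg (fun _ _ => by positivity) x

section cut
variable {n : ℕ} {U : Euc n → ℝ} {x₀ : Euc n} {R k s : ℝ}

lemma cutPow_local (hU : Continuous U) (hs : 1 < s) (hk : ∀ x ∈ sphere x₀ R, U x < k) (x : Euc n) :
    (x ∈ ball x₀ R ∧ cutPow U x₀ R k s =ᶠ[𝓝 x] (fun x => (max (U x - k) 0) ^ s)) ∨
    (x ∉ ball x₀ R ∧ cutPow U x₀ R k s =ᶠ[𝓝 x] fun _ => 0) := by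
  by_cases hx : x ∈ ball x₀ R
  · left
    refine ⟨hx, ?_⟩
    filter_upwards [isOpen_ball.mem_nhds hx] with y hy
    simp [cutPow, indicator_of_mem hy]
  · right
    refine ⟨hx, ?_⟩
    by_cases hx2 : x ∈ closedBall x₀ R
    · have hsx : x ∈ sphere x₀ R := by
        simp only [mem_ball, mem_closedBall, mem_sphere] at *; linarith
      filter_upwards [hU.continuousAt.eventually_lt_const (hk x hsx)] with y hy
      simp only [cutPow, indicator]
      split_ifs
      · rw [max_eq_right (by linarith), Real.zero_rpow (by linarith)]
      · rfl
    · filter_upwards [isClosed_closedBall.isOpen_compl.mem_nhds hx2] with y hy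
      have : y ∉ ball x₀ R := fun h => hy (ball_subset_closedBall h)
      simp [cutPow, this]

lemma cutPow_contDiff (hU : ContDiff ℝ 1 U) (hs : 1 < s) (hk : ∀ x ∈ sphere x₀ R, U x < k) :
    ContDiff ℝ 1 (cutPow U x₀ R k s) := by
  rw [contDiff_iff_contDiffAt]
  intro x
  rcases cutPow_local hU.continuous hs hk x with ⟨_, h⟩ | ⟨_, h⟩
  · refine ContDiffAt.congr_of_eventuallyEq ?_ h
    exact ((contDiff_posPow hs).comp (hU.sub contDiff_const)).contDiffAt
  · exact contDiffAt_const.congr_of_eventuallyEq h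

lemma cutPow_hasCompactSupport : HasCompactSupport (cutPow U x₀ R k s) := by
  refine HasCompactSupport.of_support_subset_isCompact (isCompact_closedBall x₀ R) ?_
  intro x hx
  by_contra h
  exact hx (by simp [cutPow, show x ∉ ball x₀ R from fun h' => h (ball_subset_closedBall h')])

lemma cutPow_gradient (hU : ContDiff ℝ 1 U) (hs : 1 < s) (hk : ∀ x ∈ sphere x₀ R, U x < k)
    (x : Euc n) :
    gradient (cutPow U x₀ R k s) x =
      (ball x₀ R).indicator (fun x => (s * (max (U x - k) 0) ^ (s - 1)) • gradient U x) x := by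
  rcases cutPow_local hU.continuous hs hk x with ⟨hx, h⟩ | ⟨hx, h⟩
  · rw [indicator_of_mem hx]
    apply HasGradientAt.gradient
    rw [hasGradientAt_iff_hasFDerivAt]
    refine HasFDerivAt.congr_of_eventuallyEq ?_ h
    have h1 : HasFDerivAt (fun x => U x - k) (fderiv ℝ U x) x :=
      ((hU.differentiable one_ne_zero x).hasFDerivAt).sub_const k
    have h2 := (hasDerivAt_posPow hs (U x - k)).comp_hasFDerivAt x h1
    rw [map_smul, toDual_gradient]
    exact h2
  · rw [indicator_of_notMem hx]
    rw [gradient, h.fderiv_eq]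
    simp

end cut

lemma norm_fderiv_eq_gradient {n : ℕ} (w : Euc n → ℝ) (x : Euc n) :
    ‖fderiv ℝ w x‖ = ‖gradient w x‖ := by
  rw [← toDual_gradient, LinearIsometryEquiv.norm_map]

lemma continuous_gradient {n : ℕ} {w : Euc n → ℝ} (hw : ContDiff ℝ 1 w) :
    Continuous (gradient w) := by
  unfold gradient
  exact (LinearIsometryEquiv.continuous _).comp (hw.continuous_fderiv one_ne_zero)

lemma mollify {n : ℕ} {φ : Euc n → ℝ} (hφ : ContDiff ℝ 1 φ) (hc : HasCompactSupport φ)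
    (h0 : ∀ x, 0 ≤ φ x) {ε : ℝ} (hε : 0 < ε) :
    ∃ ψ : Euc n → ℝ, ContDiff ℝ (⊤ : ℕ∞) ψ ∧ HasCompactSupport ψ ∧ (∀ x, 0 ≤ ψ x) ∧
      (∀ x ∉ cthickening 1 (tsupport φ), ψ x = 0 ∧ gradient ψ x = 0) ∧
      (∀ x, |ψ x - φ x| ≤ ε) ∧ ∀ x, ‖gradient ψ x - gradient φ x‖ ≤ ε := by
  have huc : UniformContinuous φ := hc.uniformContinuous_of_continuous hφ.continuous
  have huc' : UniformContinuous (fderiv ℝ φ) :=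
    (hc.fderiv (𝕜 := ℝ)).uniformContinuous_of_continuous (hφ.continuous_fderiv one_ne_zero)
  obtain ⟨d1, hd1, H1⟩ := Metric.uniformContinuous_iff.1 huc ε hε
  obtain ⟨d2, hd2, H2⟩ := Metric.uniformContinuous_iff.1 huc' ε hε
  set d := min 1 (min d1 d2) with hd
  have hdpos : 0 < d := by positivity
  let B : ContDiffBump (0 : Euc n) := ⟨d / 2, d, by positivity, by linarith⟩
  have hBd : B.rOut = d := rfl
  let ψ : Euc n → ℝ := (B.normed volume ⋆[ContinuousLinearMap.lsmul ℝ ℝ, volume] φ)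
  have hψ : ContDiff ℝ (⊤ : ℕ∞) ψ :=
    B.hasCompactSupport_normed.contDiff_convolution_left _ B.contDiff_normed
      hφ.continuous.locallyIntegrable
  have hder : ∀ x, fderiv ℝ ψ x =
      (B.normed volume ⋆[ContinuousLinearMap.lsmul ℝ ℝ, volume] fderiv ℝ φ) x := by
    intro x
    have := hc.hasFDerivAt_convolution_right (ContinuousLinearMap.lsmul ℝ ℝ)
      (f := B.normed volume) (μ := volume)
      (B.continuous_normed.locallyIntegrable) hφ x
    rw [this.fderiv]
    unfold MeasureTheory.convolution
    congr 1
  have hsupp : ∀ x ∉ cthickening 1 (tsupport φ), ψ x = 0 := by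
    intro x hx
    have hz : ∀ y ∈ ball x B.rOut, φ y = 0 := by
      intro y hy
      by_contra hne
      apply hx
      refine mem_cthickening_of_dist_le x y 1 _ (subset_tsupport φ hne) ?_
      rw [hBd, mem_ball, dist_comm] at hy
      exact hy.le.trans (min_le_left _ _)
    have := B.dist_normed_convolution_le (μ := volume) (g := φ) (x₀ := x) (ε := 0)
      hφ.continuous.aestronglyMeasurable (by
        intro y hy; rw [hz y hy, hz x (mem_ball_self B.rOut_pos)]; simp)
    rw [hz x (mem_ball_self B.rOut_pos)] at this
    exact dist_le_zero.1 this
  have hK : IsCompact (cthickening 1 (tsupport φ)) := hc.isCompact.cthickening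
  refine ⟨ψ, hψ, ?_, ?_, ?_, ?_, ?_⟩
  · exact HasCompactSupport.intro hK hsupp
  · intro x
    refine integral_nonneg fun t => ?_
    simp only [ContinuousLinearMap.lsmul_apply, smul_eq_mul]
    exact mul_nonneg (B.nonneg_normed _) (h0 _)
  · intro x hx
    refine ⟨hsupp x hx, ?_⟩
    have : ψ =ᶠ[𝓝 x] fun _ => 0 := by
      filter_upwards [isClosed_cthickening.isOpen_compl.mem_nhds hx] with y hy using hsupp y hy
    rw [gradient, this.fderiv_eq]; simp
  · intro x
    have := B.dist_normed_convolution_le (μ := volume) (g := φ) (x₀ := x) (ε := ε)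
      hφ.continuous.aestronglyMeasurable (by
        intro y hy
        rw [hBd, mem_ball] at hy
        exact (H1 (hy.trans_le ((min_le_right _ _).trans (min_le_left _ _)))).le)
    rwa [Real.dist_eq] at this
  · intro x
    have := B.dist_normed_convolution_le (μ := volume) (g := fderiv ℝ φ) (x₀ := x) (ε := ε)
      (hφ.continuous_fderiv one_ne_zero).aestronglyMeasurable (by
        intro y hy
        rw [hBd, mem_ball] at hy
        exact (H2 (hy.trans_le ((min_le_right _ _).trans (min_le_right _ _)))).le)
    rw [← hder, dist_eq_norm] at this
    unfold gradient
    rwa [← map_sub, LinearIsometryEquiv.norm_map]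

lemma integrable_inner_of_compact {n : ℕ} {V χ : Euc n → Euc n} {K : Set (Euc n)}
    (hV : LocallyIntegrable V) (hK : IsCompact K) (hχ : Continuous χ)
    (h0 : ∀ x ∉ K, χ x = 0) : Integrable (fun x => ⟪V x, χ x⟫) := by
  obtain ⟨D, hD⟩ := hK.exists_bound_of_continuousOn hχ.continuousOn
  have h1 : Integrable (K.indicator (fun x => ‖V x‖ * D)) :=
    (integrable_indicator_iff hK.measurableSet).2 ((hV.integrableOn_isCompact hK).norm.mul_const D)
  refine h1.mono' (hV.aestronglyMeasurable.inner hχ.aestronglyMeasurable) ?_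
  refine Eventually.of_forall fun x => ?_
  by_cases hx : x ∈ K
  · rw [indicator_of_mem hx]
    exact (norm_inner_le_norm _ _).trans (mul_le_mul_of_nonneg_left (hD x hx) (norm_nonneg _))
  · rw [indicator_of_notMem hx, h0 x hx]; simp

lemma integral_inner_bound {n : ℕ} {V χ : Euc n → Euc n} {K : Set (Euc n)} {ε : ℝ}
    (hV : LocallyIntegrable V) (hK : IsCompact K) (hε : ∀ x, ‖χ x‖ ≤ ε)
    (h0 : ∀ x ∉ K, χ x = 0) : |∫ x, ⟪V x, χ x⟫| ≤ ε * ∫ x in K, ‖V x‖ := by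
  have h1 : Integrable (K.indicator (fun x => ε * ‖V x‖)) :=
    (integrable_indicator_iff hK.measurableSet).2 ((hV.integrableOn_isCompact hK).norm.const_mul ε)
  rw [← integral_const_mul, ← integral_indicator hK.measurableSet, ← Real.norm_eq_abs]
  refine norm_integral_le_of_norm_le h1 (Eventually.of_forall fun x => ?_)
  by_cases hx : x ∈ K
  · rw [indicator_of_mem hx, mul_comm]
    exact (norm_inner_le_norm _ _).trans (mul_le_mul_of_nonneg_left (hε x) (norm_nonneg _))
  · rw [indicator_of_notMem hx, h0 x hx]; simp

lemma integrable_mul_of_compact {n : ℕ} {V χ : Euc n → ℝ} {K : Set (Euc n)}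
    (hV : LocallyIntegrable V) (hK : IsCompact K) (hχ : Continuous χ)
    (h0 : ∀ x ∉ K, χ x = 0) : Integrable (fun x => V x * χ x) := by
  obtain ⟨D, hD⟩ := hK.exists_bound_of_continuousOn hχ.continuousOn
  have h1 : Integrable (K.indicator (fun x => ‖V x‖ * D)) :=
    (integrable_indicator_iff hK.measurableSet).2 ((hV.integrableOn_isCompact hK).norm.mul_const D)
  refine h1.mono' (hV.aestronglyMeasurable.mul hχ.aestronglyMeasurable) ?_
  refine Eventually.of_forall fun x => ?_
  by_cases hx : x ∈ K
  · rw [indicator_of_mem hx]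
    exact (norm_mul_le _ _).trans (mul_le_mul_of_nonneg_left (hD x hx) (norm_nonneg _))
  · rw [indicator_of_notMem hx, h0 x hx]; simp

lemma integral_mul_bound {n : ℕ} {V χ : Euc n → ℝ} {K : Set (Euc n)} {ε : ℝ}
    (hV : LocallyIntegrable V) (hK : IsCompact K) (hε : ∀ x, |χ x| ≤ ε)
    (h0 : ∀ x ∉ K, χ x = 0) : |∫ x, V x * χ x| ≤ ε * ∫ x in K, ‖V x‖ := by
  have h1 : Integrable (K.indicator (fun x => ε * ‖V x‖)) :=
    (integrable_indicator_iff hK.measurableSet).2 ((hV.integrableOn_isCompact hK).norm.const_mul ε)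
  rw [← integral_const_mul, ← integral_indicator hK.measurableSet, ← Real.norm_eq_abs]
  refine norm_integral_le_of_norm_le h1 (Eventually.of_forall fun x => ?_)
  by_cases hx : x ∈ K
  · rw [indicator_of_mem hx, mul_comm ε]
    exact (norm_mul_le _ _).trans (mul_le_mul_of_nonneg_left (hε x) (norm_nonneg _))
  · rw [indicator_of_notMem hx, h0 x hx]; simp

lemma weak_C1 {n : ℕ} {V : Euc n → Euc n} {c : Euc n → ℝ}
    (hV : LocallyIntegrable V) (hc : LocallyIntegrable c)
    (h : ∀ ψ : Euc n → ℝ, ContDiff ℝ (⊤ : ℕ∞) ψ → HasCompactSupport ψ → (∀ x, 0 ≤ ψ x) →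
      0 ≤ -(∫ x, ⟪V x, gradient ψ x⟫) + ∫ x, c x * ψ x)
    (φ : Euc n → ℝ) (hφ : ContDiff ℝ 1 φ) (hcs : HasCompactSupport φ) (h0 : ∀ x, 0 ≤ φ x) :
    0 ≤ -(∫ x, ⟪V x, gradient φ x⟫) + ∫ x, c x * φ x := by
  set K := cthickening 1 (tsupport φ) with hKdef
  have hK : IsCompact K := hcs.isCompact.cthickening
  have hsub : tsupport φ ⊆ K := self_subset_cthickening _
  have hφ0 : ∀ x ∉ K, φ x = 0 := fun x hx => image_eq_zero_of_notMem_tsupport fun h => hx (hsub h)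
  have hgφ0 : ∀ x ∉ K, gradient φ x = 0 := by
    intro x hx
    have : fderiv ℝ φ x = 0 := by
      by_contra hne
      exact hx (hsub (support_fderiv_subset ℝ hne))
    rw [gradient, this]; simp
  set I := (∫ x in K, ‖V x‖) + ∫ x in K, ‖c x‖ with hI
  have hI0 : 0 ≤ I := by positivity
  refine le_of_forall_pos_le_add fun e he => ?_
  have hε : 0 < e / (I + 1) := by positivity
  obtain ⟨ψ, hψ, hψc, hψ0, hoff, hd, hgd⟩ := mollify hφ hcs h0 hε
  have hψ1 : ContDiff ℝ 1 ψ := hψ.of_le (by exact_mod_cast le_top)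
  have H := h ψ hψ hψc hψ0
  have b1 := integral_inner_bound (χ := fun x => gradient ψ x - gradient φ x) hV hK hgd
    (fun x hx => by simp only [(hoff x hx).2, hgφ0 x hx, sub_zero])
  have b2 := integral_mul_bound (χ := fun x => ψ x - φ x) hc hK hd
    (fun x hx => by simp only [(hoff x hx).1, hφ0 x hx, sub_zero])
  have e1 : ∫ x, ⟪V x, gradient ψ x - gradient φ x⟫ =
      (∫ x, ⟪V x, gradient ψ x⟫) - ∫ x, ⟪V x, gradient φ x⟫ := by
    rw [← integral_sub]
    · simp only [inner_sub_right]
    · exact integrable_inner_of_compact hV hK (continuous_gradient hψ1) fun x hx => (hoff x hx).2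
    · exact integrable_inner_of_compact hV hK (continuous_gradient hφ) hgφ0
  have e2 : ∫ x, c x * (ψ x - φ x) = (∫ x, c x * ψ x) - ∫ x, c x * φ x := by
    rw [← integral_sub]
    · simp only [mul_sub]
    · exact integrable_mul_of_compact hc hK hψ1.continuous fun x hx => (hoff x hx).1
    · exact integrable_mul_of_compact hc hK hφ.continuous hφ0
  rw [e1] at b1
  rw [e2] at b2
  have : e / (I + 1) * I ≤ e := by
    rw [div_mul_eq_mul_div, div_le_iff₀ (by positivity)]; nlinarith
  have b1' := abs_le.1 b1
  have b2' := abs_le.1 b2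
  have : e / (I + 1) * I = e / (I+1) * (∫ x in K, ‖V x‖) + e / (I+1) * ∫ x in K, ‖c x‖ := by
    rw [hI]; ring
  linarith

lemma locallyIntegrable_of_locBdd {n : ℕ} {F : Type*} [NormedAddCommGroup F]
    {f : Euc n → F} (hm : AEStronglyMeasurable f)
    (hb : ∀ K : Set (Euc n), IsCompact K → ∃ C, ∀ x ∈ K, ‖f x‖ ≤ C) : LocallyIntegrable f := by
  rw [locallyIntegrable_iff]
  intro K hK
  obtain ⟨C, hC⟩ := hb K hK
  exact Measure.integrableOn_of_bounded hK.measure_lt_top.ne hm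
    ((ae_restrict_iff' hK.measurableSet).2 (Eventually.of_forall hC))

/-- The critical exponent. -/
def kap (n : ℕ) : ℝ := (n : ℝ) / (n - 1)

lemma kap_conj {n : ℕ} (hn : 2 ≤ n) : Real.HolderConjugate (n : ℝ) (kap n) := by
  have : (2:ℝ) ≤ n := by exact_mod_cast hn
  exact Real.HolderConjugate.conjExponent (by linarith)

lemma sobolev (n : ℕ) (hn : 2 ≤ n) : ∃ CS : ℝ, 0 < CS ∧ ∀ w : Euc n → ℝ, ContDiff ℝ 1 w →
    HasCompactSupport w → (∀ x, 0 ≤ w x) →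
    ∫ x, w x ^ kap n ≤ CS * (∫ x, ‖gradient w x‖) ^ kap n := by
  have hconj := kap_conj hn
  have hk0 : 0 < kap n := hconj.symm.pos
  refine ⟨(lintegralPowLePowLIntegralFDerivConst (volume : Measure (Euc n)) (kap n) : ℝ) + 1,
    by positivity, fun w hw hc h0 => ?_⟩
  have H := lintegral_pow_le_pow_lintegral_fderiv (volume : Measure (Euc n)) hw hc
    (p := kap n) (by simpa using hconj)
  have hwint : Integrable (fun x => gradient w x) := by
    refine (continuous_gradient hw).integrable_of_hasCompactSupport ?_
    refine HasCompactSupport.intro hc.isCompact fun x hx => ?_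
    have : fderiv ℝ w x = 0 := by
      by_contra hne
      exact hx (support_fderiv_subset ℝ hne)
    rw [gradient, this]; simp
  have e1 : ∫⁻ x, ‖fderiv ℝ w x‖ₑ = ENNReal.ofReal (∫ x, ‖gradient w x‖) := by
    rw [ofReal_integral_norm_eq_lintegral_enorm hwint]
    congr 1; ext x
    rw [← ofReal_norm, ← ofReal_norm, norm_fderiv_eq_gradient]
  have hI0 : 0 ≤ ∫ x, ‖gradient w x‖ := by positivity
  rw [e1, ENNReal.ofReal_rpow_of_nonneg hI0 hk0.le] at H
  have e2 : ∫ x, w x ^ kap n = (∫⁻ x, ‖w x‖ₑ ^ kap n).toReal := by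
    rw [integral_eq_lintegral_of_nonneg_ae]
    · congr 1
      refine lintegral_congr fun x => ?_
      rw [← ENNReal.ofReal_rpow_of_nonneg (h0 x) hk0.le, ← ofReal_norm, Real.norm_of_nonneg (h0 x)]
    · exact Eventually.of_forall fun x => Real.rpow_nonneg (h0 x) _
    · exact (hw.continuous.rpow_const fun x => Or.inr hk0.le).aestronglyMeasurable
  rw [e2]
  have H2 := ENNReal.toReal_mono (by finiteness) H
  rw [ENNReal.toReal_mul, ENNReal.toReal_ofReal (by positivity), ENNReal.coe_toReal] at H2
  refine H2.trans (mul_le_mul_of_nonneg_right (by linarith) (by positivity))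

lemma cheb {n : ℕ} (hn : 2 ≤ n) {w : Euc n → ℝ} (hw : Continuous w) (hc : HasCompactSupport w)
    (h0 : ∀ x, 0 ≤ w x) {t : ℝ} (ht : 0 ≤ t) {E : Set (Euc n)} (hE : MeasurableSet E)
    (hEf : volume E ≠ ∞) (h : ∀ x ∈ E, t ≤ w x) :
    t ^ kap n * volume.real E ≤ ∫ x, w x ^ kap n := by
  have hk0 : 0 < kap n := (kap_conj hn).symm.pos
  have hcont : Continuous fun x => w x ^ kap n := hw.rpow_const fun x => Or.inr hk0.le
  have hwint : Integrable fun x => w x ^ kap n := by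
    refine hcont.integrable_of_hasCompactSupport ?_
    refine HasCompactSupport.intro hc.isCompact fun x hx => ?_
    rw [image_eq_zero_of_notMem_tsupport hx, Real.zero_rpow hk0.ne']
  calc t ^ kap n * volume.real E = ∫ x in E, t ^ kap n := by simp [mul_comm]
    _ ≤ ∫ x in E, w x ^ kap n := by
        refine setIntegral_mono_on (integrableOn_const hEf) hwint.integrableOn hE fun x hx => ?_
        exact Real.rpow_le_rpow ht (h x hx) hk0.le
    _ ≤ ∫ x, w x ^ kap n :=
        setIntegral_le_integral hwint (Eventually.of_forall fun x => Real.rpow_nonneg (h0 x) _)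

lemma holderZ {n : ℕ} (hn : 2 ≤ n) {w : Euc n → ℝ} (hw : Continuous w) (hc : HasCompactSupport w)
    (h0 : ∀ x, 0 ≤ w x) {Z : Set (Euc n)} (hZf : volume Z ≠ ∞) :
    ∫ x in Z, w x ≤ (volume.real Z) ^ (1 / (n:ℝ)) * (∫ x, w x ^ kap n) ^ (1 / kap n) := by
  have hconj := kap_conj hn
  have hk0 : 0 < kap n := hconj.symm.pos
  have hcont : Continuous fun x => w x ^ kap n := hw.rpow_const fun x => Or.inr hk0.le
  have hwint : Integrable fun x => w x ^ kap n := by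
    refine hcont.integrable_of_hasCompactSupport ?_
    refine HasCompactSupport.intro hc.isCompact fun x hx => ?_
    rw [image_eq_zero_of_notMem_tsupport hx, Real.zero_rpow hk0.ne']
  have : IsFiniteMeasure (volume.restrict Z) := ⟨by simpa using hZf.lt_top⟩
  have H := integral_mul_le_Lp_mul_Lq_of_nonneg (μ := volume.restrict Z) hconj
    (f := fun _ => (1:ℝ)) (g := w) (Eventually.of_forall fun _ => zero_le_one)
    (Eventually.of_forall h0) (memLp_const 1) ((hw.memLp_of_hasCompactSupport hc).restrict Z)
  simp only [one_mul, Real.one_rpow, integral_const, smul_eq_mul, mul_one] at H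
  refine H.trans ?_
  have e : (volume.restrict Z).real univ = volume.real Z := by simp [Measure.real]
  rw [e]
  refine mul_le_mul_of_nonneg_left ?_ (by positivity)
  refine Real.rpow_le_rpow (integral_nonneg fun x => Real.rpow_nonneg (h0 x) _) ?_ (by positivity)
  exact setIntegral_le_integral hwint (Eventually.of_forall fun x => Real.rpow_nonneg (h0 x) _)

/-- fast geometric convergence -/
lemma degiorgi (P c g : ℝ) (hP : 0 < P) (hc : 1 < c) (hg : 0 < g) :
    ∃ ε : ℝ, 0 < ε ∧ ∀ y : ℕ → ℝ, (∀ j, 0 ≤ y j) → (∀ j, y (j+1) ≤ P * c ^ j * y j ^ (1 + g)) →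
      y 0 ≤ ε → Tendsto y atTop (𝓝 0) := by
  set θ : ℝ := c ^ (-(1/g)) with hθ
  have hc0 : 0 < c := by linarith
  have hθ0 : 0 < θ := by positivity
  have hθ1 : θ < 1 := Real.rpow_lt_one_of_one_lt_of_neg hc (by simpa using hg)
  have hθg : c * θ ^ g = 1 := by
    rw [hθ, ← Real.rpow_mul hc0.le, show -(1/g) * g = -1 by field_simp, Real.rpow_neg_one]
    field_simp
  refine ⟨(θ / P) ^ (1/g), by positivity, fun y hy hrec h0 => ?_⟩
  set ε := (θ / P) ^ (1/g) with hε
  have hε0 : 0 < ε := by positivity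
  have hεg : P * ε ^ g = θ := by
    rw [hε, ← Real.rpow_mul (by positivity), one_div_mul_cancel hg.ne', Real.rpow_one]; field_simp
  have key : ∀ j, y j ≤ ε * θ ^ j := by
    intro j
    induction j with
    | zero => simpa using h0
    | succ j ih =>
      calc y (j+1) ≤ P * c ^ j * y j ^ (1 + g) := hrec j
        _ ≤ P * c ^ j * (ε * θ ^ j) ^ (1 + g) := by
            gcongr
            exact hy j
        _ = (P * ε ^ g) * (c * θ ^ g) ^ j * (ε * θ ^ j) := by
            rw [Real.rpow_add (by positivity), Real.rpow_one, Real.mul_rpow hε0.le (by positivity),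
              ← Real.rpow_natCast θ j, ← Real.rpow_mul hθ0.le, mul_comm (j:ℝ) g,
              Real.rpow_mul hθ0.le, Real.rpow_natCast, Real.rpow_natCast, mul_pow]
            ring
        _ = ε * θ ^ (j+1) := by rw [hεg, hθg, one_pow, pow_succ]; ring
  refine squeeze_zero hy key ?_
  simpa using (tendsto_pow_atTop_nhds_zero_of_lt_one hθ0.le hθ1).const_mul ε

/-- a vector field / lower order term pair satisfying `div V + c ≥ 0` weakly -/
def WeakPair {n : ℕ} (V : Euc n → Euc n) (c : Euc n → ℝ) : Prop :=
  LocallyIntegrable V ∧ LocallyIntegrable c ∧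
  ∀ ψ : Euc n → ℝ, ContDiff ℝ (⊤ : ℕ∞) ψ → HasCompactSupport ψ → (∀ x, 0 ≤ ψ x) →
      0 ≤ -(∫ x, ⟪V x, gradient ψ x⟫) + ∫ x, c x * ψ x

lemma test_cut {n : ℕ} {V : Euc n → Euc n} {c : Euc n → ℝ} (h : WeakPair V c)
    {U : Euc n → ℝ} (hU : ContDiff ℝ 1 U) {x₀ : Euc n} {R k : ℝ}
    (hk : ∀ x ∈ sphere x₀ R, U x < k) :
    IntegrableOn (fun x => c x * (max (U x - k) 0) ^ 2 -
        2 * (max (U x - k) 0) * ⟪V x, gradient U x⟫) (ball x₀ R) ∧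
    0 ≤ ∫ x in ball x₀ R, (c x * (max (U x - k) 0) ^ 2 -
        2 * (max (U x - k) 0) * ⟪V x, gradient U x⟫) := by
  obtain ⟨hV, hc, ht⟩ := h
  have h2 : (1:ℝ) < 2 := by norm_num
  have hC := cutPow_contDiff (x₀ := x₀) hU h2 hk
  have hCc := cutPow_hasCompactSupport (U := U) (x₀ := x₀) (R := R) (k := k) (s := 2)
  have H := weak_C1 hV hc ht _ hC hCc (cutPow_nonneg U x₀ R k 2)
  have hoff : ∀ x ∉ closedBall x₀ R, x ∉ ball x₀ R := fun x hx h' => hx (ball_subset_closedBall h')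
  have i1 : Integrable (fun x => ⟪V x, gradient (cutPow U x₀ R k 2) x⟫) :=
    integrable_inner_of_compact hV (isCompact_closedBall x₀ R) (continuous_gradient hC)
      (fun x hx => by rw [cutPow_gradient hU h2 hk, indicator_of_notMem (hoff x hx)])
  have i2 : Integrable (fun x => c x * cutPow U x₀ R k 2 x) :=
    integrable_mul_of_compact hc (isCompact_closedBall x₀ R) hC.continuous
      (fun x hx => by rw [cutPow, indicator_of_notMem (hoff x hx)])
  have e : (fun x => c x * cutPow U x₀ R k 2 x - ⟪V x, gradient (cutPow U x₀ R k 2) x⟫) =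
      (ball x₀ R).indicator (fun x => c x * (max (U x - k) 0) ^ 2 -
        2 * (max (U x - k) 0) * ⟪V x, gradient U x⟫) := by
    ext x
    rw [cutPow_gradient hU h2 hk, cutPow]
    by_cases hx : x ∈ ball x₀ R
    · simp only [indicator_of_mem hx]
      rw [inner_smul_right, Real.rpow_two, show (2:ℝ) - 1 = 1 by norm_num, Real.rpow_one]
    · simp only [indicator_of_notMem hx]; simp
  have i3 := i2.sub i1
  have e' : ∫ x, (c x * cutPow U x₀ R k 2 x - ⟪V x, gradient (cutPow U x₀ R k 2) x⟫) =
    (∫ x, c x * cutPow U x₀ R k 2 x) - ∫ x, ⟪V x, gradient (cutPow U x₀ R k 2) x⟫ :=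
    integral_sub i2 i1
  rw [e, integral_indicator measurableSet_ball] at e'
  constructor
  · rw [← integrable_indicator_iff measurableSet_ball, ← e]
    exact i3
  · rw [e']; linarith

lemma rpow_split {p a : ℝ} (hp : 1 < p) (ha : 0 ≤ a) : a ^ p = a * a ^ (p - 1) := by
  rcases ha.eq_or_lt with h | h
  · rw [← h, Real.zero_rpow (by linarith)]; simp
  · nth_rewrite 2 [← Real.rpow_one a]
    rw [← Real.rpow_add h]; ring_nf

lemma young1 {p D f a C₁ : ℝ} (hp : 1 < p) (hD : 0 ≤ D) (hf : 0 ≤ f) (ha : 0 ≤ a) (hC : 0 < C₁) :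
    D * f * a ^ (p - 1) ≤ C₁ * a ^ p + D * (D / C₁) ^ (p - 1) * f ^ p := by
  have hap : 0 ≤ a ^ (p-1) := by positivity
  rcases le_total (D * f) (C₁ * a) with h | h
  · have : D * f * a ^ (p-1) ≤ C₁ * a ^ p := by
      rw [rpow_split hp ha, ← mul_assoc]
      exact mul_le_mul_of_nonneg_right h hap
    have : 0 ≤ D * (D / C₁) ^ (p - 1) * f ^ p := by positivity
    linarith
  · have h1 : a ≤ D / C₁ * f := by
      rw [div_mul_eq_mul_div, le_div_iff₀ hC]; linarith
    have h2 : a ^ (p-1) ≤ (D / C₁) ^ (p-1) * f ^ (p-1) := by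
      rw [← Real.mul_rpow (by positivity) hf]
      exact Real.rpow_le_rpow ha h1 (by linarith)
    have h3 : D * f * a ^ (p-1) ≤ D * f * ((D / C₁) ^ (p-1) * f ^ (p-1)) :=
      mul_le_mul_of_nonneg_left h2 (by positivity)
    have h4 : D * (D / C₁) ^ (p - 1) * f ^ p = D * f * ((D / C₁) ^ (p-1) * f ^ (p-1)) := by
      rw [rpow_split hp hf]; ring
    have : 0 ≤ C₁ * a ^ p := by positivity
    linarith

lemma young2 {p f a : ℝ} (hp : 1 < p) (hf : 0 ≤ f) (ha : 0 ≤ a) :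
    f ^ (p - 1) * a ≤ f ^ p + a ^ p := by
  rcases le_total f a with h | h
  · have : f ^ (p-1) ≤ a ^ (p-1) := Real.rpow_le_rpow hf h (by linarith)
    have h2 : 0 ≤ f ^ p := by positivity
    rw [rpow_split hp ha]; nlinarith
  · have h2 : 0 ≤ a ^ p := by positivity
    have h3 : 0 ≤ f ^ (p-1) := by positivity
    rw [rpow_split hp hf]; nlinarith

lemma max_princ {n : ℕ} (hn : 2 ≤ n) {V : Euc n → Euc n} {c : Euc n → ℝ} (h : WeakPair V c)
    {u : Euc n → ℝ} (hu : ContDiff ℝ 1 u) {p C₁ B : ℝ} (hp : 1 < p) (hC₁ : 0 < C₁) (hB : 0 ≤ B)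
    {x₀ : Euc n} {R m : ℝ}
    (hcoer : ∀ x, C₁ * ‖gradient u x‖ ^ p ≤ ⟪V x, gradient u x⟫)
    (hcb : ∀ x ∈ ball x₀ R, c x ≤ B * ‖gradient u x‖ ^ (p - 1))
    (hm : ∀ x ∈ sphere x₀ R, u x ≤ m) : ∀ x ∈ closedBall x₀ R, u x ≤ m := by
  intro x1 hx1
  by_contra hcon
  push Not at hcon
  obtain ⟨xs, hxs, hmax⟩ := (isCompact_closedBall x₀ R).exists_isMaxOn ⟨x1, hx1⟩ hu.continuous.continuousOn
  set S := u xs with hS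
  have hmS : m < S := hcon.trans_le (hmax hx1)
  have hxsb : xs ∈ ball x₀ R := by
    by_contra hb
    have : xs ∈ sphere x₀ R := by
      simp only [mem_ball, mem_closedBall, mem_sphere] at *; linarith
    have := hm xs this
    linarith
  obtain ⟨CS, hCS, hsob⟩ := sobolev n hn
  have hcg := continuous_gradient hu
  have hp1 : 1 < p + 1 := by linarith
  set C' := B * (B / C₁) ^ (p - 1) with hC'
  have hC'0 : 0 ≤ C' := by positivity
  let Z : ℝ → Set (Euc n) := fun k => ball x₀ R ∩ ({x | k < u x} ∩ {x | gradient u x ≠ 0})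
  have hZm : ∀ k, MeasurableSet (Z k) := fun k =>
    measurableSet_ball.inter ((isOpen_lt continuous_const hu.continuous).measurableSet.inter
      (isOpen_ne_fun hcg continuous_const).measurableSet)
  have hZf : ∀ k, volume (Z k) ≠ ∞ := fun k =>
    ((measure_mono inter_subset_left).trans_lt measure_ball_lt_top).ne
  have hsph : ∀ k, m < k → ∀ x ∈ sphere x₀ R, u x < k := fun k hk x hx => (hm x hx).trans_lt hk
  have hcontI : ∀ F : Euc n → ℝ, Continuous F → IntegrableOn F (ball x₀ R) := fun F hF =>
    (hF.continuousOn.integrableOn_compact (isCompact_closedBall x₀ R)).mono_set ball_subset_closedBall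
  have step : ∀ k, m < k → ∫ x, ‖gradient (cutPow u x₀ R k (p+1)) x‖ ≤
      (p + 1) * (1 + C' / C₁) * ∫ x in Z k, cutPow u x₀ R k (p+1) x := by
    intro k hk
    have hpos : ∀ x, 0 ≤ max (u x - k) 0 := fun x => le_max_right _ _
    have hfc : Continuous fun x => max (u x - k) 0 :=
      (hu.continuous.sub continuous_const).max continuous_const
    have hfp : Continuous fun x => (max (u x - k) 0) ^ (p+1) :=
      hfc.rpow_const fun x => Or.inr (by linarith)
    have hfa : Continuous fun x => (max (u x - k) 0) * ‖gradient u x‖ ^ p :=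
      hfc.mul (hcg.norm.rpow_const fun x => Or.inr (by linarith))
    obtain ⟨ti, t0⟩ := test_cut h hu (hsph k hk)
    have iZ : IntegrableOn ((Z k).indicator fun x => (max (u x - k) 0) ^ (p+1)) (ball x₀ R) :=
      (hcontI _ hfp).indicator (hZm k)
    have hprod : ∀ x, (max (u x - k) 0) ^ (p+1) = max (u x - k) 0 * (max (u x - k) 0) ^ p := by
      intro x
      rw [rpow_split hp1 (hpos x)]; ring_nf
    have hzero : ∀ x ∈ ball x₀ R, x ∉ Z k → max (u x - k) 0 = 0 ∨ ‖gradient u x‖ = 0 := by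
      intro x hx hxZ
      by_contra hne
      push Not at hne
      apply hxZ
      refine ⟨hx, ?_, ?_⟩
      · by_contra hle
        exact hne.1 (max_eq_right (by simpa using hle))
      · exact fun h0 => hne.2 (by rw [h0, norm_zero])
    have energy : C₁ * ∫ x in ball x₀ R, (max (u x - k) 0) * ‖gradient u x‖ ^ p ≤
        C' * ∫ x in ball x₀ R, (Z k).indicator (fun x => (max (u x - k) 0) ^ (p+1)) x := by
      have : ∫ x in ball x₀ R, (c x * (max (u x - k) 0) ^ 2 -
          2 * (max (u x - k) 0) * ⟪V x, gradient u x⟫) ≤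
          ∫ x in ball x₀ R, (C' * (Z k).indicator (fun x => (max (u x - k) 0) ^ (p+1)) x -
            C₁ * ((max (u x - k) 0) * ‖gradient u x‖ ^ p)) := by
        refine setIntegral_mono_on ti ((iZ.const_mul C').sub ((hcontI _ hfa).const_mul C₁))
          measurableSet_ball fun x hx => ?_
        set f := max (u x - k) 0 with hf
        have hf0 : 0 ≤ f := hpos x
        set a := ‖gradient u x‖ with ha
        have ha0 : 0 ≤ a := norm_nonneg _
        have h1 : c x * f ^ 2 ≤ B * a ^ (p-1) * f ^ 2 :=
          mul_le_mul_of_nonneg_right (hcb x hx) (by positivity)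
        have h2 : 2 * f * (C₁ * a ^ p) ≤ 2 * f * ⟪V x, gradient u x⟫ :=
          mul_le_mul_of_nonneg_left (hcoer x) (by positivity)
        by_cases hxZ : x ∈ Z k
        · rw [indicator_of_mem hxZ, hprod x]
          have h3 := mul_le_mul_of_nonneg_left (young1 hp hB hf0 ha0 hC₁) hf0
          rw [← hC'] at h3
          nlinarith
        · rw [indicator_of_notMem hxZ]
          rcases hzero x hx hxZ with h0 | h0
          · rw [← hf] at h0; rw [h0] at *; simp
          · rw [← ha] at h0
            rw [h0, Real.zero_rpow (by linarith : p - 1 ≠ 0)] at h1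
            rw [h0, Real.zero_rpow (by linarith : p ≠ 0)] at h2 ⊢
            linarith
      rw [integral_sub (iZ.const_mul C') ((hcontI _ hfa).const_mul C₁), integral_const_mul,
        integral_const_mul] at this
      linarith
    have eZ : ∫ x in ball x₀ R, (Z k).indicator (fun x => (max (u x - k) 0) ^ (p+1)) x =
        ∫ x in Z k, cutPow u x₀ R k (p+1) x := by
      rw [setIntegral_indicator (hZm k), show ball x₀ R ∩ Z k = Z k from
        inter_eq_right.2 inter_subset_left]
      refine setIntegral_congr_fun (hZm k) fun x hx => ?_
      simp [cutPow, indicator_of_mem hx.1]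
    have eG : ∫ x, ‖gradient (cutPow u x₀ R k (p+1)) x‖ =
        ∫ x in ball x₀ R, (p+1) * (max (u x - k) 0) ^ p * ‖gradient u x‖ := by
      rw [← integral_indicator measurableSet_ball]
      congr 1; ext x
      rw [cutPow_gradient hu hp1 (hsph k hk)]
      by_cases hx : x ∈ ball x₀ R
      · rw [indicator_of_mem hx, indicator_of_mem hx, norm_smul, Real.norm_of_nonneg (by
          have := hpos x; positivity)]
        ring_nf
      · rw [indicator_of_notMem hx, indicator_of_notMem hx, norm_zero]
    rw [eG, ← eZ]
    have hfp' : Continuous fun x => (max (u x - k) 0) ^ p :=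
      hfc.rpow_const fun x => Or.inr (by linarith)
    have G1 : ∫ x in ball x₀ R, (p+1) * (max (u x - k) 0) ^ p * ‖gradient u x‖ ≤
        ∫ x in ball x₀ R, (p+1) * ((Z k).indicator (fun x => (max (u x - k) 0) ^ (p+1)) x +
            ((max (u x - k) 0) * ‖gradient u x‖ ^ p)) := by
      refine setIntegral_mono_on (hcontI _ ((continuous_const.mul hfp').mul hcg.norm))
        ((iZ.add (hcontI _ hfa)).const_mul (p+1)) measurableSet_ball fun x hx => ?_
      rw [mul_assoc]
      refine mul_le_mul_of_nonneg_left ?_ (by linarith)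
      have hf0 := hpos x
      have ha0 : 0 ≤ ‖gradient u x‖ := norm_nonneg _
      by_cases hxZ : x ∈ Z k
      · rw [indicator_of_mem hxZ, hprod x]
        have := mul_le_mul_of_nonneg_left (young2 hp hf0 ha0) hf0
        rw [rpow_split hp hf0] at this ⊢
        nlinarith
      · rw [indicator_of_notMem hxZ]
        rcases hzero x hx hxZ with h0 | h0
        · rw [h0, Real.zero_rpow (by linarith)]; simp
        · rw [h0, Real.zero_rpow (by linarith)]; simp
    rw [integral_const_mul, integral_add iZ (hcontI _ hfa)] at G1
    refine G1.trans ?_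
    rw [mul_assoc]
    refine mul_le_mul_of_nonneg_left ?_ (by linarith)
    rw [add_mul, one_mul]
    refine add_le_add le_rfl ?_
    rw [div_mul_eq_mul_div, le_div_iff₀ hC₁]
    linarith
  let kk : ℕ → ℝ := fun j => S - (S - m) * (1/2) ^ (j+1)
  have hkm : ∀ j, m < kk j := by
    intro j
    have : ((1:ℝ)/2) ^ (j+1) < 1 := pow_lt_one₀ (by norm_num) (by norm_num) (by omega)
    simp only [kk]; nlinarith
  have hkS : ∀ j, kk j < S := by
    intro j
    have : (0:ℝ) < (1/2) ^ (j+1) := by positivity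
    simp only [kk]; nlinarith
  have hkmono : Monotone kk := by
    intro i j hij
    have : ((1:ℝ)/2) ^ (j+1) ≤ (1/2) ^ (i+1) :=
      pow_le_pow_of_le_one (by norm_num) (by norm_num) (by omega)
    simp only [kk]; nlinarith
  have hklim : Tendsto kk atTop (𝓝 S) := by
    have := (tendsto_pow_atTop_nhds_zero_of_lt_one (r := (1:ℝ)/2) (by norm_num) (by norm_num))
    have := (this.comp (tendsto_add_atTop_nat 1)).const_mul (S - m)
    simpa [kk] using this.const_sub S
  have hlim : Tendsto (fun j => volume (Z (kk j))) atTop (𝓝 0) := by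
    have hT := tendsto_measure_iInter_atTop (μ := volume) (s := fun j => Z (kk j))
      (fun j => (hZm _).nullMeasurableSet)
      (fun i j hij x hx => ⟨hx.1, (hkmono hij).trans_lt hx.2.1, hx.2.2⟩) ⟨0, hZf _⟩
    have he : ⋂ j, Z (kk j) = ∅ := by
      ext x
      simp only [mem_iInter, mem_empty_iff_false, iff_false]
      intro hx
      have hxb := (hx 0).1
      have hxS : S ≤ u x := le_of_tendsto' hklim fun j => (hx j).2.1.le
      have hloc : IsLocalMax u x := by
        filter_upwards [isOpen_ball.mem_nhds hxb] with y hy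
        exact (hmax (ball_subset_closedBall hy)).trans hxS
      apply (hx 0).2.2
      rw [gradient, hloc.fderiv_eq_zero]; simp
    rw [he, measure_empty] at hT
    exact hT
  have hn0 : (0:ℝ) < n := by exact_mod_cast (by omega : 0 < n)
  have hk0 : 0 < kap n := (kap_conj hn).symm.pos
  have hlim2 : Tendsto (fun j => (p + 1) * (1 + C' / C₁) *
      ((volume.real (Z (kk j))) ^ (1/(n:ℝ)) * CS ^ (1 / kap n))) atTop (𝓝 0) := by
    have h1 : Tendsto (fun j => volume.real (Z (kk j))) atTop (𝓝 0) := by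
      have := (ENNReal.tendsto_toReal (by simp : (0:ℝ≥0∞) ≠ ∞)).comp hlim
      rw [ENNReal.toReal_zero] at this
      exact this
    have h2 := h1.rpow_const (p := 1/(n:ℝ)) (Or.inr (by positivity))
    rw [Real.zero_rpow (by positivity)] at h2
    simpa using (h2.mul_const (CS ^ (1 / kap n))).const_mul ((p + 1) * (1 + C' / C₁))
  obtain ⟨j, hj⟩ := (hlim2.eventually_lt_const (show (0:ℝ) < 1 by norm_num)).exists
  set k := kk j with hk
  set W := cutPow u x₀ R k (p+1) with hW
  have hWc : ContDiff ℝ 1 W := cutPow_contDiff hu hp1 (hsph k (hkm j))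
  have hWs : HasCompactSupport W := cutPow_hasCompactSupport
  have hW0 : ∀ x, 0 ≤ W x := cutPow_nonneg u x₀ R k (p+1)
  set I := ∫ x, ‖gradient W x‖ with hI
  have hI0 : 0 ≤ I := by positivity
  have hs1 := hsob W hWc hWs hW0
  have hIz : I = 0 := by
    have a1 := step k (hkm j)
    have a2 := holderZ hn hWc.continuous hWs hW0 (hZf k)
    have a3 : (∫ x, W x ^ kap n) ^ (1 / kap n) ≤ CS ^ (1 / kap n) * I := by
      have := Real.rpow_le_rpow (integral_nonneg fun x => Real.rpow_nonneg (hW0 x) _) hs1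
        (show 0 ≤ 1 / kap n by positivity)
      rwa [Real.mul_rpow hCS.le (by positivity), ← Real.rpow_mul hI0, mul_one_div_cancel hk0.ne',
        Real.rpow_one] at this
    have a4 : I ≤ (p + 1) * (1 + C' / C₁) *
      ((volume.real (Z k)) ^ (1/(n:ℝ)) * (CS ^ (1 / kap n) * I)) := by
      refine a1.trans (mul_le_mul_of_nonneg_left (a2.trans ?_) (by positivity))
      exact mul_le_mul_of_nonneg_left a3 (by positivity)
    by_contra hne
    have hIp : 0 < I := lt_of_le_of_ne hI0 (Ne.symm hne)
    have := mul_lt_mul_of_pos_right hj hIp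
    linarith
  rw [← hI, hIz, Real.zero_rpow hk0.ne', mul_zero] at hs1
  set E := ball x₀ R ∩ {x | (k + S)/2 < u x} with hE
  have hEo : IsOpen E := isOpen_ball.inter (isOpen_lt continuous_const hu.continuous)
  have hEf : volume E ≠ ∞ := ((measure_mono inter_subset_left).trans_lt measure_ball_lt_top).ne
  have hkS' := hkS j
  rw [← hk] at hkS'
  have ch := cheb hn hWc.continuous hWs hW0 (t := ((S - k)/2) ^ (p+1))
    (by have : 0 < S - k := by linarith
        positivity) hEo.measurableSet hEf (by
      intro x hx
      have hx2 : (k + S)/2 < u x := hx.2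
      rw [hW, cutPow, indicator_of_mem hx.1]
      refine Real.rpow_le_rpow (by linarith) ((le_max_left _ _).trans' (by linarith)) (by linarith))
  have hEpos : 0 < volume.real E := by
    refine ENNReal.toReal_pos (hEo.measure_pos volume ⟨xs, hxsb, ?_⟩).ne' hEf
    show (k + S)/2 < u xs
    linarith
  have : 0 < (((S - k)/2) ^ (p+1)) ^ kap n := by
    have : 0 < S - k := by linarith
    positivity
  have := mul_pos this hEpos
  linarith

/-- hypotheses of the local estimate -/
structure LocHyp {n : ℕ} (V : Euc n → Euc n) (c u : Euc n → ℝ) (x₀ : Euc n)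
    (T h Mb K p C₁ C₂ β S : ℝ) : Prop where
  weak : WeakPair V c
  hu : ContDiff ℝ 1 u
  hT : 0 < T
  hh : 0 < h
  hK : 0 < K
  hp : 1 < p
  hC₁ : 0 < C₁
  hC₂ : 0 < C₂
  hβ0 : 0 < β
  hβ1 : β < 1
  hS0 : 0 ≤ S
  coer : ∀ x, C₁ * ‖gradient u x‖ ^ p ≤ ⟪V x, gradient u x⟫
  growth : ∀ x, ‖V x‖ ≤ C₂ * ‖gradient u x‖ ^ (p - 1)
  upper : ∀ x ∈ closedBall x₀ (h/2), u x ≤ Mb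
  center : Mb - T * h ≤ u x₀
  cb : ∀ᵐ x ∂(volume.restrict (ball x₀ (h/2))), Mb - (1 + β) * (T * h) < u x →
    c x ≤ S * ‖gradient u x‖ ^ p - K
  hS : S * (2 * (T * h)) ≤ C₁ / 2

/-- the function `u` minus a paraboloid -/
def parU {n : ℕ} (u : Euc n → ℝ) (x₀ : Euc n) (T h : ℝ) : Euc n → ℝ :=
  fun x => u x - 8 * (T / h) * ‖x - x₀‖ ^ 2

lemma parU_contDiff {n : ℕ} {u : Euc n → ℝ} (hu : ContDiff ℝ 1 u) (x₀ : Euc n) (T h : ℝ) :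
    ContDiff ℝ 1 (parU u x₀ T h) :=
  hu.sub (contDiff_const.mul ((contDiff_id.sub contDiff_const).norm_sq ℝ))

lemma parU_gradient {n : ℕ} {u : Euc n → ℝ} (hu : ContDiff ℝ 1 u) (x₀ : Euc n) (T h : ℝ)
    (x : Euc n) : gradient (parU u x₀ T h) x = gradient u x - (16 * (T / h)) • (x - x₀) := by
  apply HasGradientAt.gradient
  rw [hasGradientAt_iff_hasFDerivAt]
  have h1 := (hu.differentiable one_ne_zero x).hasFDerivAt
  have h2 : HasFDerivAt (fun y : Euc n => ‖y - x₀‖ ^ 2)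
      (2 • (innerSL ℝ (x - x₀)).comp (ContinuousLinearMap.id ℝ (Euc n))) x :=
    ((hasFDerivAt_id x).sub_const x₀).norm_sq
  have h3 := h1.sub (h2.const_mul (8 * (T / h)))
  refine h3.congr_fderiv ?_
  rw [map_sub (InnerProductSpace.toDual ℝ (Euc n)), toDual_gradient]
  congr 1
  ext y
  simp
  ring

def C3 (p C₁ C₂ : ℝ) : ℝ := 16 * C₂ * (16 * C₂ / C₁) ^ (p - 1)

section loc
variable {n : ℕ} {V : Euc n → Euc n} {c u : Euc n → ℝ} {x₀ : Euc n}
    {T h Mb K p C₁ C₂ β S : ℝ}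

lemma loc_sphere (H : LocHyp V c u x₀ T h Mb K p C₁ C₂ β S) {k : ℝ}
    (hk : Mb - (1 + β) * (T * h) ≤ k) : ∀ x ∈ sphere x₀ (h/2), parU u x₀ T h x < k := by
  intro x hx
  have hT := H.hT
  have hh := H.hh
  have h1 := H.upper x (sphere_subset_closedBall hx)
  rw [mem_sphere, dist_eq_norm] at hx
  have h2 : 8 * (T / h) * (h/2) ^ 2 = 2 * (T * h) := by field_simp; ring
  rw [parU, hx, h2]
  have := mul_lt_mul_of_pos_right H.hβ1 (mul_pos hT hh)
  linarith

lemma parU_le (H : LocHyp V c u x₀ T h Mb K p C₁ C₂ β S) (x : Euc n) : parU u x₀ T h x ≤ u x := by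
  have hT := H.hT
  have hh := H.hh
  have : 0 ≤ 8 * (T / h) * ‖x - x₀‖ ^ 2 := by positivity
  rw [parU]; linarith

lemma energy_loc (H : LocHyp V c u x₀ T h Mb K p C₁ C₂ β S) {k : ℝ}
    (hk : Mb - (1 + β) * (T * h) ≤ k) :
    C₁ / 2 * (∫ x in ball x₀ (h/2), max (parU u x₀ T h x - k) 0 * ‖gradient u x‖ ^ p) +
      K * (∫ x in ball x₀ (h/2), (max (parU u x₀ T h x - k) 0) ^ 2) ≤
    C3 p C₁ C₂ * T ^ p * ∫ x in ball x₀ (h/2), max (parU u x₀ T h x - k) 0 := by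
  have hT := H.hT
  have hh := H.hh
  have hU := parU_contDiff H.hu x₀ T h
  obtain ⟨ti, t0⟩ := test_cut H.weak hU (loc_sphere H hk)
  have hcg := continuous_gradient H.hu
  have hcontI : ∀ F : Euc n → ℝ, Continuous F → IntegrableOn F (ball x₀ (h/2)) := fun F hF =>
    (hF.continuousOn.integrableOn_compact (isCompact_closedBall x₀ (h/2))).mono_set
      ball_subset_closedBall
  have hfc : Continuous fun x => max (parU u x₀ T h x - k) 0 :=
    (hU.continuous.sub continuous_const).max continuous_const
  have hfa : Continuous fun x => (max (parU u x₀ T h x - k) 0) * ‖gradient u x‖ ^ p :=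
    hfc.mul (hcg.norm.rpow_const fun x => Or.inr (by linarith [H.hp]))
  have i1 := (hcontI _ hfc).const_mul (C3 p C₁ C₂ * T ^ p)
  have i2 := (hcontI _ hfa).const_mul (C₁ / 2)
  have i3 : Integrable (fun x => K * (max (parU u x₀ T h x - k) 0) ^ 2)
      (volume.restrict (ball x₀ (h/2))) := (hcontI _ (hfc.pow 2)).const_mul K
  have i23 : Integrable (fun x => C₁ / 2 * (max (parU u x₀ T h x - k) 0 * ‖gradient u x‖ ^ p) +
      K * (max (parU u x₀ T h x - k) 0) ^ 2) (volume.restrict (ball x₀ (h/2))) := i2.add i3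
  have : ∫ x in ball x₀ (h/2), (c x * (max (parU u x₀ T h x - k) 0) ^ 2 -
        2 * (max (parU u x₀ T h x - k) 0) * ⟪V x, gradient (parU u x₀ T h) x⟫) ≤
      ∫ x in ball x₀ (h/2), (C3 p C₁ C₂ * T ^ p * max (parU u x₀ T h x - k) 0 -
        (C₁ / 2 * (max (parU u x₀ T h x - k) 0 * ‖gradient u x‖ ^ p) +
          K * (max (parU u x₀ T h x - k) 0) ^ 2)) := by
    refine integral_mono_ae ti (i1.sub i23) ?_
    filter_upwards [H.cb, ae_restrict_mem measurableSet_ball] with x hc hx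
    set f := max (parU u x₀ T h x - k) 0 with hf
    have hf0 : 0 ≤ f := le_max_right _ _
    set a := ‖gradient u x‖ with ha
    have ha0 : 0 ≤ a := norm_nonneg _
    have hap : 0 ≤ a ^ p := by positivity
    rcases hf0.eq_or_lt with h0 | hfpos
    · rw [← h0]; simp
    have hUk : k < parU u x₀ T h x := by
      by_contra hle
      rw [hf, max_eq_right (by linarith)] at hfpos
      exact lt_irrefl _ hfpos
    have hfe : f = parU u x₀ T h x - k := by rw [hf]; exact max_eq_left (by linarith)
    have hle := parU_le H x
    have hup := H.upper x (ball_subset_closedBall hx)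
    have hTh := mul_pos hT hh
    have hf2 : f ≤ 2 * (T * h) := by
      have := mul_lt_mul_of_pos_right H.hβ1 hTh
      linarith
    have hc' := hc (by linarith)
    have e1 : c x * f ^ 2 ≤ (S * a ^ p - K) * f ^ 2 := mul_le_mul_of_nonneg_right hc' (by positivity)
    have e2 : S * a ^ p * f ^ 2 ≤ C₁ / 2 * (f * a ^ p) := by
      have h1 : S * f ≤ C₁ / 2 := (mul_le_mul_of_nonneg_left hf2 H.hS0).trans H.hS
      have := mul_le_mul_of_nonneg_right h1 (mul_nonneg hf0 hap)
      nlinarith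
    have e3 : C₁ * a ^ p - C₂ * a ^ (p - 1) * (8 * T) ≤ ⟪V x, gradient (parU u x₀ T h) x⟫ := by
      rw [parU_gradient H.hu, inner_sub_right]
      have g1 := H.coer x
      have g2 := H.growth x
      have g3 : ‖(16 * (T / h)) • (x - x₀)‖ ≤ 8 * T := by
        rw [norm_smul, Real.norm_of_nonneg (by positivity)]
        rw [mem_ball, dist_eq_norm] at hx
        calc 16 * (T / h) * ‖x - x₀‖ ≤ 16 * (T / h) * (h / 2) := by gcongr
          _ = 8 * T := by field_simp; ring
      have g4 := real_inner_le_norm (V x) ((16 * (T / h)) • (x - x₀))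
      have g5 : ‖V x‖ * ‖(16 * (T / h)) • (x - x₀)‖ ≤ C₂ * a ^ (p - 1) * (8 * T) :=
        mul_le_mul g2 g3 (norm_nonneg _) ((norm_nonneg _).trans g2)
      linarith
    have e4 := young1 H.hp (show 0 ≤ 16 * C₂ by linarith [H.hC₂]) hT.le ha0 H.hC₁
    have e5 : 2 * f * (C₁ * a ^ p - C₂ * a ^ (p - 1) * (8 * T)) ≤
      2 * f * ⟪V x, gradient (parU u x₀ T h) x⟫ := mul_le_mul_of_nonneg_left e3 (by positivity)
    have e6 := mul_le_mul_of_nonneg_left e4 hf0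
    have e7 : C3 p C₁ C₂ = 16 * C₂ * (16 * C₂ / C₁) ^ (p - 1) := rfl
    rw [← e7] at e6
    nlinarith
  rw [integral_sub i1 i23, integral_add i2 i3, integral_const_mul, integral_const_mul,
    integral_const_mul] at this
  linarith

/-- super-level sets in the ball -/
def lev {n : ℕ} (u : Euc n → ℝ) (x₀ : Euc n) (T h k : ℝ) : Set (Euc n) :=
  ball x₀ (h/2) ∩ {x | k < parU u x₀ T h x}

lemma lev_open (H : LocHyp V c u x₀ T h Mb K p C₁ C₂ β S) (k : ℝ) : IsOpen (lev u x₀ T h k) :=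
  isOpen_ball.inter (isOpen_lt continuous_const (parU_contDiff H.hu x₀ T h).continuous)

lemma lev_fin (k : ℝ) : volume (lev u x₀ T h k) ≠ ∞ :=
  ((measure_mono inter_subset_left).trans_lt measure_ball_lt_top).ne

lemma int_f_le (H : LocHyp V c u x₀ T h Mb K p C₁ C₂ β S) {k : ℝ}
    (hk : Mb - (1 + β) * (T * h) ≤ k) :
    ∫ x in ball x₀ (h/2), max (parU u x₀ T h x - k) 0 ≤
      2 * (T * h) * volume.real (lev u x₀ T h k) := by
  have hU := parU_contDiff H.hu x₀ T h
  have hfc : Continuous fun x => max (parU u x₀ T h x - k) 0 :=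
    (hU.continuous.sub continuous_const).max continuous_const
  have hTh := mul_pos H.hT H.hh
  have hm := (lev_open H k).measurableSet
  have e : 2 * (T * h) * volume.real (lev u x₀ T h k) =
      ∫ x in ball x₀ (h/2), (lev u x₀ T h k).indicator (fun _ => 2 * (T * h)) x := by
    rw [setIntegral_indicator hm, show ball x₀ (h/2) ∩ lev u x₀ T h k = lev u x₀ T h k from
        inter_eq_right.2 inter_subset_left]
    simp [mul_comm]
  rw [e]
  refine setIntegral_mono_on ((hfc.continuousOn.integrableOn_compact
    (isCompact_closedBall x₀ (h/2))).mono_set ball_subset_closedBall)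
    ((integrableOn_const (measure_ball_lt_top.ne)).indicator hm) measurableSet_ball fun x hx => ?_
  by_cases hxl : x ∈ lev u x₀ T h k
  · rw [indicator_of_mem hxl]
    have hle := parU_le H x
    have hup := H.upper x (ball_subset_closedBall hx)
    have := mul_lt_mul_of_pos_right H.hβ1 hTh
    exact max_le (by linarith) (by linarith)
  · rw [indicator_of_notMem hxl]
    have : ¬ k < parU u x₀ T h x := fun hlt => hxl ⟨hx, hlt⟩
    exact max_le (by linarith) le_rfl

lemma C3_pos (hC₁ : 0 < C₁) (hC₂ : 0 < C₂) : 0 < C3 p C₁ C₂ := by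
  unfold C3; positivity

lemma grad_loc (H : LocHyp V c u x₀ T h Mb K p C₁ C₂ β S) {k : ℝ}
    (hk : Mb - (1 + β) * (T * h) ≤ k) :
    ∫ x, ‖gradient (cutPow (parU u x₀ T h) x₀ (h/2) k 2) x‖ ≤
      (36 + 8 * C3 p C₁ C₂ / C₁) * (T ^ 2 * h) * volume.real (lev u x₀ T h k) := by
  have hT := H.hT
  have hh := H.hh
  have hC₁ := H.hC₁
  have hU := parU_contDiff H.hu x₀ T h
  have hcg := continuous_gradient H.hu
  have hcontI : ∀ F : Euc n → ℝ, Continuous F → IntegrableOn F (ball x₀ (h/2)) := fun F hF =>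
    (hF.continuousOn.integrableOn_compact (isCompact_closedBall x₀ (h/2))).mono_set
      ball_subset_closedBall
  have hfc : Continuous fun x => max (parU u x₀ T h x - k) 0 :=
    (hU.continuous.sub continuous_const).max continuous_const
  have hfa : Continuous fun x => (max (parU u x₀ T h x - k) 0) * ‖gradient u x‖ ^ p :=
    hfc.mul (hcg.norm.rpow_const fun x => Or.inr (by linarith [H.hp]))
  have hpos : ∀ x, 0 ≤ max (parU u x₀ T h x - k) 0 := fun x => le_max_right _ _
  have eG : ∫ x, ‖gradient (cutPow (parU u x₀ T h) x₀ (h/2) k 2) x‖ =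
      ∫ x in ball x₀ (h/2), 2 * max (parU u x₀ T h x - k) 0 * ‖gradient (parU u x₀ T h) x‖ := by
    rw [← integral_indicator measurableSet_ball]
    congr 1; ext x
    rw [cutPow_gradient hU (by norm_num) (loc_sphere H hk)]
    by_cases hx : x ∈ ball x₀ (h/2)
    · rw [indicator_of_mem hx, indicator_of_mem hx, norm_smul, Real.norm_of_nonneg (by
        have := hpos x; positivity), show (2:ℝ) - 1 = 1 by norm_num, Real.rpow_one]
    · rw [indicator_of_notMem hx, indicator_of_notMem hx, norm_zero]
  set I := ∫ x, ‖gradient (cutPow (parU u x₀ T h) x₀ (h/2) k 2) x‖ with hI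
  have hTp : 0 < T ^ (p-1) := by positivity
  have G1 : T ^ (p-1) * I ≤ 18 * T ^ p * (∫ x in ball x₀ (h/2), max (parU u x₀ T h x - k) 0) +
      2 * ∫ x in ball x₀ (h/2), max (parU u x₀ T h x - k) 0 * ‖gradient u x‖ ^ p := by
    rw [eG, ← integral_const_mul, ← integral_const_mul, ← integral_const_mul,
      ← integral_add ((hcontI _ hfc).const_mul _) ((hcontI _ hfa).const_mul _)]
    refine setIntegral_mono_on (hcontI _ (continuous_const.mul ((continuous_const.mul hfc).mul
      (continuous_gradient hU).norm)))
      (((hcontI _ hfc).const_mul _).add ((hcontI _ hfa).const_mul _)) measurableSet_ball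
      fun x hx => ?_
    have hf0 := hpos x
    set f := max (parU u x₀ T h x - k) 0 with hf
    have y := young2 H.hp hT.le (norm_nonneg (gradient u x))
    have g3 : ‖(16 * (T / h)) • (x - x₀)‖ ≤ 8 * T := by
      rw [norm_smul, Real.norm_of_nonneg (by positivity)]
      rw [mem_ball, dist_eq_norm] at hx
      calc 16 * (T / h) * ‖x - x₀‖ ≤ 16 * (T / h) * (h / 2) := by gcongr
        _ = 8 * T := by field_simp; ring
    have g4 : ‖gradient (parU u x₀ T h) x‖ ≤ ‖gradient u x‖ + 8 * T := by
      rw [parU_gradient H.hu]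
      exact (norm_sub_le _ _).trans (by linarith)
    have g5 := mul_le_mul_of_nonneg_left g4 hTp.le
    have g6 : T ^ (p-1) * ‖gradient (parU u x₀ T h) x‖ ≤ 9 * T ^ p + ‖gradient u x‖ ^ p := by
      have : T ^ (p-1) * (8 * T) = 8 * T ^ p := by rw [rpow_split H.hp hT.le]; ring
      linarith
    have g7 := mul_le_mul_of_nonneg_left g6 (show 0 ≤ 2 * f by linarith)
    linarith
  have en := energy_loc H hk
  have fl := int_f_le H hk
  set v := volume.real (lev u x₀ T h k) with hv
  set J := ∫ x in ball x₀ (h/2), max (parU u x₀ T h x - k) 0 with hJ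
  set L := ∫ x in ball x₀ (h/2), max (parU u x₀ T h x - k) 0 * ‖gradient u x‖ ^ p with hL
  have hsq : 0 ≤ K * ∫ x in ball x₀ (h/2), (max (parU u x₀ T h x - k) 0) ^ 2 :=
    mul_nonneg H.hK.le (integral_nonneg fun x => by positivity)
  have hC3 : 0 < C3 p C₁ C₂ := C3_pos H.hC₁ H.hC₂
  have hTp' : 0 < T ^ p := by positivity
  have hL2 : L ≤ 2 * C3 p C₁ C₂ / C₁ * T ^ p * J := by
    rw [div_mul_eq_mul_div, div_mul_eq_mul_div, le_div_iff₀ hC₁]; nlinarith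
  have hfin : T ^ (p-1) * I ≤ T ^ (p-1) * ((36 + 8 * C3 p C₁ C₂ / C₁) * (T ^ 2 * h) * v) := by
    calc T ^ (p-1) * I ≤ (18 + 4 * C3 p C₁ C₂ / C₁) * T ^ p * J := by
          have : 2 * (2 * C3 p C₁ C₂ / C₁ * T ^ p * J) = 4 * C3 p C₁ C₂ / C₁ * T ^ p * J := by ring
          linarith
      _ ≤ (18 + 4 * C3 p C₁ C₂ / C₁) * T ^ p * (2 * (T * h) * v) :=
          mul_le_mul_of_nonneg_left fl (by positivity)
      _ = _ := by rw [rpow_split H.hp hT.le]; ring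
  exact le_of_mul_le_mul_left hfin hTp

lemma init_loc (H : LocHyp V c u x₀ T h Mb K p C₁ C₂ β S) {k d : ℝ} (hd : 0 ≤ d)
    (hk : Mb - (1 + β) * (T * h) ≤ k) :
    K * (d ^ 2 * volume.real (lev u x₀ T h (k + d))) ≤
      C3 p C₁ C₂ * T ^ p * (2 * (T * h) * volume.real (lev u x₀ T h k)) := by
  have hT := H.hT
  have hh := H.hh
  have hC₁ := H.hC₁
  have hU := parU_contDiff H.hu x₀ T h
  have hfc : Continuous fun x => (max (parU u x₀ T h x - k) 0) ^ 2 :=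
    ((hU.continuous.sub continuous_const).max continuous_const).pow 2
  have hi : IntegrableOn (fun x => (max (parU u x₀ T h x - k) 0) ^ 2) (ball x₀ (h/2)) :=
    (hfc.continuousOn.integrableOn_compact (isCompact_closedBall x₀ (h/2))).mono_set
      ball_subset_closedBall
  have en := energy_loc H hk
  have fl := int_f_le H hk
  have hL : 0 ≤ C₁ / 2 * ∫ x in ball x₀ (h/2), max (parU u x₀ T h x - k) 0 * ‖gradient u x‖ ^ p :=
    mul_nonneg (by linarith) (integral_nonneg fun x => by positivity)
  have hC3 : 0 < C3 p C₁ C₂ := C3_pos H.hC₁ H.hC₂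
  have fl2 := mul_le_mul_of_nonneg_left fl (show 0 ≤ C3 p C₁ C₂ * T ^ p by positivity)
  have hch : d ^ 2 * volume.real (lev u x₀ T h (k + d)) ≤
      ∫ x in ball x₀ (h/2), (max (parU u x₀ T h x - k) 0) ^ 2 := by
    calc d ^ 2 * volume.real (lev u x₀ T h (k + d)) = ∫ x in lev u x₀ T h (k + d), d ^ 2 := by
          simp [mul_comm]
      _ ≤ ∫ x in lev u x₀ T h (k + d), (max (parU u x₀ T h x - k) 0) ^ 2 := by
          refine setIntegral_mono_on (integrableOn_const (lev_fin _)) (hi.mono_set inter_subset_left)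
            (lev_open H _).measurableSet fun x hx => ?_
          have : k + d < parU u x₀ T h x := hx.2
          exact pow_le_pow_left₀ hd ((le_max_left _ _).trans' (by linarith)) 2
      _ ≤ _ := setIntegral_mono_set hi (Eventually.of_forall fun x => by positivity)
          (LE.le.eventuallyLE inter_subset_left)
  have := mul_le_mul_of_nonneg_left hch H.hK.le
  linarith

lemma step_loc (hn : 2 ≤ n) {CS : ℝ} (hCS : 0 < CS)
    (hsob : ∀ w : Euc n → ℝ, ContDiff ℝ 1 w →
      HasCompactSupport w → (∀ x, 0 ≤ w x) →
      ∫ x, w x ^ kap n ≤ CS * (∫ x, ‖gradient w x‖) ^ kap n)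
    (H : LocHyp V c u x₀ T h Mb K p C₁ C₂ β S) {k d : ℝ} (hd : 0 < d)
    (hk : Mb - (1 + β) * (T * h) ≤ k) :
    volume.real (lev u x₀ T h (k + d)) ≤
      CS * ((36 + 8 * C3 p C₁ C₂ / C₁) * (T ^ 2 * h) * volume.real (lev u x₀ T h k) / d ^ 2)
        ^ kap n := by
  have hT := H.hT
  have hh := H.hh
  have hC₁ := H.hC₁
  have hk0 : 0 < kap n := (kap_conj hn).symm.pos
  have hU := parU_contDiff H.hu x₀ T h
  have hC3 : 0 < C3 p C₁ C₂ := C3_pos H.hC₁ H.hC₂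
  have hWc := cutPow_contDiff (s := 2) hU (by norm_num) (loc_sphere H hk)
  have hWs := cutPow_hasCompactSupport (U := parU u x₀ T h) (x₀ := x₀) (R := h/2) (k := k) (s := 2)
  have hW0 := cutPow_nonneg (parU u x₀ T h) x₀ (h/2) k 2
  have a1 := hsob _ hWc hWs hW0
  have a2 := grad_loc H hk
  have a3 := cheb hn hWc.continuous hWs hW0 (t := d ^ 2) (by positivity)
    (lev_open H (k + d)).measurableSet (lev_fin _) (by
      intro x hx
      have : k + d < parU u x₀ T h x := hx.2
      rw [cutPow, indicator_of_mem hx.1, Real.rpow_two]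
      exact pow_le_pow_left₀ hd.le ((le_max_left _ _).trans' (by linarith)) 2)
  rw [Real.div_rpow (by positivity) (by positivity), ← mul_div_assoc, le_div_iff₀ (by positivity)]
  have a4 := Real.rpow_le_rpow (by positivity) a2 hk0.le
  have a5 := mul_le_mul_of_nonneg_left a4 hCS.le
  linarith

end loc

lemma kap_pow {n : ℕ} (hn : 2 ≤ n) {h : ℝ} (hh : 0 < h) : (h ^ (n - 1)) ^ kap n = h ^ n := by
  rw [← Real.rpow_natCast, ← Real.rpow_mul hh.le, ← Real.rpow_natCast]
  congr 1
  have : (2:ℝ) ≤ n := by exact_mod_cast hn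
  rw [kap, Nat.cast_sub (by omega)]
  push_cast
  have : (n:ℝ) - 1 ≠ 0 := by linarith
  field_simp

lemma local_lemma (n : ℕ) (hn : 2 ≤ n) (p C₁ C₂ β : ℝ) (hC₁ : 0 < C₁)
    (hC₂ : 0 < C₂) (hβ0 : 0 < β) :
    ∃ ε : ℝ, 0 < ε ∧ ∀ (V : Euc n → Euc n) (c u : Euc n → ℝ) (x₀ : Euc n) (T h Mb K S : ℝ),
      LocHyp V c u x₀ T h Mb K p C₁ C₂ β S → T ^ (p - 1) ≤ ε * K * h → False := by
  obtain ⟨CS, hCS, hsob⟩ := sobolev n hn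
  have hk1 : 1 < kap n := (kap_conj hn).symm.lt
  have hC3 : 0 < C3 p C₁ C₂ := C3_pos hC₁ hC₂
  set C5 := 36 + 8 * C3 p C₁ C₂ / C₁ with hC5
  have hC5p : 0 < C5 := by positivity
  set P := CS * (64 * C5 / β ^ 2) ^ kap n with hP
  obtain ⟨ε0, hε0, hdg⟩ := degiorgi P (4 ^ kap n) (kap n - 1) (by positivity)
    (Real.one_lt_rpow (by norm_num) (by linarith)) (by linarith)
  set ω := volume.real (ball (0 : Euc n) 1) with hω
  have hω0 : 0 ≤ ω := measureReal_nonneg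
  refine ⟨ε0 * β ^ 2 / (32 * C3 p C₁ C₂ * (ω + 1)), by positivity, ?_⟩
  intro V c u x₀ T h Mb K S H hTK
  have hT := H.hT
  have hh := H.hh
  have hK := H.hK
  set k0 := Mb - (1 + β) * (T * h) with hk0
  set kk : ℕ → ℝ := fun j => k0 + β * (T * h) / 2 * (1 - (1 / 2) ^ j) with hkk
  have hD : 0 < β * (T * h) / 2 := by positivity
  have hkk0 : ∀ j, k0 ≤ kk j := by
    intro j
    have : (1 / 2 : ℝ) ^ j ≤ 1 := pow_le_one₀ (by norm_num) (by norm_num)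
    have := mul_nonneg hD.le (sub_nonneg.2 this)
    simp only [hkk]; linarith
  have hkk1 : ∀ j, kk (j + 1) = kk j + β * (T * h) / 4 * (1/2) ^ j := by
    intro j; simp only [hkk, pow_succ]; ring
  have hkkD : ∀ j, kk j ≤ k0 + β * (T * h) / 2 := by
    intro j
    have := mul_nonneg hD.le (show (0:ℝ) ≤ (1/2) ^ j by positivity)
    simp only [hkk]; linarith
  set y : ℕ → ℝ := fun j => volume.real (lev u x₀ T h (kk (j + 1))) / h ^ n with hy
  have hy0 : ∀ j, 0 ≤ y j := fun j => div_nonneg measureReal_nonneg (by positivity)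
  have hstep : ∀ j, y (j+1) ≤ P * (4 ^ kap n) ^ j * y j ^ (1 + (kap n - 1)) := by
    intro j
    rw [show 1 + (kap n - 1) = kap n by ring]
    have hs := step_loc hn hCS hsob H (k := kk (j+1)) (d := β * (T * h) / 4 * (1/2) ^ (j+1))
      (by positivity) (hkk0 _)
    rw [← hkk1] at hs
    have hv : volume.real (lev u x₀ T h (kk (j + 1))) = y j * h ^ n := by
      simp only [hy]; field_simp
    rw [hv, ← hC5] at hs
    have e : C5 * (T ^ 2 * h) * (y j * h ^ n) / (β * (T * h) / 4 * (1/2) ^ (j+1)) ^ 2 =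
        64 * C5 / β ^ 2 * 4 ^ j * y j * h ^ (n - 1) := by
      have e4 : ((4:ℝ) ^ j) * ((1/2:ℝ) ^ j) ^ 2 = 1 := by
        rw [← pow_mul, mul_comm j 2, pow_mul, ← mul_pow]; norm_num
      have e5 : h ^ n = h ^ (n - 1) * h := by rw [← pow_succ]; congr 1; omega
      rw [div_eq_iff (by positivity), e5, pow_succ (1/2:ℝ) j]
      have : 64 * C5 / β ^ 2 * 4 ^ j * y j * h ^ (n - 1) *
          (β * (T * h) / 4 * ((1 / 2) ^ j * (1 / 2))) ^ 2 =
          (4 ^ j * ((1/2) ^ j) ^ 2) * (C5 * (T ^ 2 * h) * (y j * (h ^ (n - 1) * h))) := by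
        field_simp
        ring
      rw [this, e4, one_mul]
    have hyj := hy0 j
    rw [e, Real.mul_rpow (by positivity) (by positivity), Real.mul_rpow (by positivity) hyj,
      Real.mul_rpow (by positivity) (by positivity), kap_pow hn hh] at hs
    have e6 : ((4:ℝ) ^ j) ^ kap n = (4 ^ kap n) ^ j := by
      rw [← Real.rpow_natCast, ← Real.rpow_mul (by norm_num), ← Real.rpow_natCast,
        ← Real.rpow_mul (by norm_num), mul_comm]
    rw [e6] at hs
    show _ / h ^ n ≤ _
    rw [div_le_iff₀ (by positivity), hP]
    linarith
  have hinit : y 0 ≤ ε0 := by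
    have hi := init_loc H (k := kk 0) (d := β * (T * h) / 4 * (1/2) ^ 0) (by positivity) (hkk0 _)
    rw [← hkk1] at hi
    have hb : volume.real (lev u x₀ T h (kk 0)) ≤ (ω + 1) * h ^ n := by
      calc volume.real (lev u x₀ T h (kk 0)) ≤ volume.real (ball x₀ h) :=
            measureReal_mono (inter_subset_left.trans (ball_subset_ball (by linarith)))
              measure_ball_lt_top.ne
        _ = h ^ n * ω := by
            rw [hω, measureReal_def, measureReal_def, Measure.addHaar_ball_of_pos _ _ hh]
            simp [hh.le]
        _ ≤ _ := by nlinarith [pow_pos hh n]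
    show _ / h ^ n ≤ _
    rw [div_le_iff₀ (by positivity)]
    have e1 : K * ((β * (T * h) / 4 * (1 / 2) ^ 0) ^ 2 * volume.real (lev u x₀ T h (kk (0 + 1)))) =
      (K * h * β ^ 2 / 16) * (T ^ 2 * h) * volume.real (lev u x₀ T h (kk (0 + 1))) := by ring
    rw [e1, rpow_split H.hp hT.le] at hi
    have e2 := mul_le_mul_of_nonneg_left hb (show 0 ≤ C3 p C₁ C₂ * T ^ (p-1) * 2 * (T^2*h) by positivity)
    set v := volume.real (lev u x₀ T h (kk (0 + 1))) with hv
    have e3 : (T^2*h) * (K * h * β ^ 2 / 16 * v) ≤ (T^2*h) *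
        (2 * C3 p C₁ C₂ * (ω + 1) * h ^ n * T ^ (p-1)) := by
      calc _ = K * h * β ^ 2 / 16 * (T ^ 2 * h) * v := by ring
        _ ≤ _ := hi
        _ = C3 p C₁ C₂ * T ^ (p-1) * 2 * (T^2*h) * volume.real (lev u x₀ T h (kk 0)) := by ring
        _ ≤ _ := e2
        _ = _ := by ring
    have e4 := le_of_mul_le_mul_left e3 (by positivity)
    have e5 := mul_le_mul_of_nonneg_left hTK (show 0 ≤ 2 * C3 p C₁ C₂ * (ω + 1) * h ^ n by positivity)
    have e6 : 2 * C3 p C₁ C₂ * (ω + 1) * h ^ n *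
        (ε0 * β ^ 2 / (32 * C3 p C₁ C₂ * (ω + 1)) * K * h) = (K * h * β ^ 2 / 16) * (ε0 * h ^ n) := by
      field_simp
      ring
    exact le_of_mul_le_mul_left (e4.trans (e5.trans e6.le)) (by positivity)
  have hlim := hdg y hy0 hstep hinit
  set W := lev u x₀ T h (k0 + β * (T * h) / 2) with hW
  have hWne : W.Nonempty := ⟨x₀, mem_ball_self (by linarith), by
    have := H.center
    show k0 + β * (T * h) / 2 < parU u x₀ T h x₀
    simp only [parU, sub_self, norm_zero]
    nlinarith [mul_pos hβ0 (mul_pos hT hh)]⟩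
  have hWpos : 0 < volume.real W :=
    ENNReal.toReal_pos ((lev_open H _).measure_pos volume hWne).ne' (lev_fin _)
  have hge : ∀ j, volume.real W / h ^ n ≤ y j := by
    intro j
    refine div_le_div_of_nonneg_right (measureReal_mono ?_ (lev_fin _)) (by positivity)
    intro x hx
    exact ⟨hx.1, (hkkD _).trans_lt hx.2⟩
  have := ge_of_tendsto' hlim hge
  have : 0 < volume.real W / h ^ n := by positivity
  linarith

lemma locInt_mul_cont {n : ℕ} {b f : Euc n → ℝ} (hbm : Measurable b) (hb0 : ∀ x, 0 ≤ b x)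
    (hbl : LocBdd b) (hf : Continuous f) : LocallyIntegrable (fun x => b x * f x) := by
  refine locallyIntegrable_of_locBdd (hbm.mul hf.measurable).aestronglyMeasurable ?_
  intro K hK
  obtain ⟨C, hC⟩ := hbl K hK
  obtain ⟨D, hD⟩ := hK.exists_bound_of_continuousOn hf.continuousOn
  refine ⟨C * D, fun x hx => ?_⟩
  rw [norm_mul, Real.norm_of_nonneg (hb0 x)]
  exact mul_le_mul (hC x hx) (hD x hx) (norm_nonneg _) ((hb0 x).trans (hC x hx))

section sol
variable {n : ℕ} {p C₁ C₂ α : ℝ} {A : Euc n → Euc n → Euc n} {b q : Euc n → ℝ} {g : ℝ → ℝ}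
  {u : Euc n → ℝ}

lemma weakPair_of_sol (hp : 1 < p) (hα₁ : p - 1 ≤ α)
    (hA : StructCond A p C₁ C₂) (hbm : Measurable b) (hb0 : ∀ x, 0 ≤ b x) (hbl : LocBdd b)
    (hqm : Measurable q) (hq0 : ∀ x, 0 ≤ q x) (hql : LocBdd q)
    (hg : ContinuousOn g (Set.Ici 0)) (hu : ContDiff ℝ 1 u) (hu0 : ∀ x, 0 ≤ u x)
    (hsol : IsWeakSol A b α (fun x => q x * g (u x)) Set.univ u) :
    WeakPair (fun x => A x (gradient u x))
      (fun x => b x * ‖gradient u x‖ ^ α - q x * g (u x)) := by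
  have hcg := continuous_gradient hu
  have hgu : Continuous fun x => g (u x) := by
    rw [← continuousOn_univ]
    exact hg.comp hu.continuous.continuousOn fun x _ => hu0 x
  have hga : Continuous fun x => ‖gradient u x‖ ^ α :=
    hcg.norm.rpow_const fun x => Or.inr (by linarith)
  have hgp : Continuous fun x => C₂ * ‖gradient u x‖ ^ (p - 1) :=
    continuous_const.mul (hcg.norm.rpow_const fun x => Or.inr (by linarith))
  have l1 := locInt_mul_cont hbm hb0 hbl hga
  have l2 := locInt_mul_cont hqm hq0 hql hgu
  refine ⟨?_, l1.sub l2, ?_⟩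
  · refine locallyIntegrable_of_locBdd
      (hA.1.comp (measurable_id.prodMk hcg.measurable)).aestronglyMeasurable ?_
    intro K hK
    obtain ⟨D, hD⟩ := hK.exists_bound_of_continuousOn hgp.continuousOn
    exact ⟨D, fun x hx => ((hA.2 x _).2.trans (le_abs_self _)).trans (hD x hx)⟩
  · intro ψ hψ hψs hψ0
    have h := hsol ψ hψ hψs (subset_univ _) hψ0
    simp only [setIntegral_univ] at h
    have j1 := integrable_mul_of_compact l1 hψs.isCompact hψ.continuous
      (fun x hx => image_eq_zero_of_notMem_tsupport hx)
    have j2 := integrable_mul_of_compact l2 hψs.isCompact hψ.continuous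
      (fun x hx => image_eq_zero_of_notMem_tsupport hx)
    simp only [sub_mul]
    rw [integral_sub j1 j2]
    linarith

lemma sphere_ne (hn : 2 ≤ n) {r : ℝ} (hr : 0 ≤ r) : (sphere (0 : Euc n) r).Nonempty := by
  have : Nonempty (Fin n) := ⟨⟨0, by omega⟩⟩
  exact NormedSpace.sphere_nonempty.2 hr

lemma sphMax_attained (hn : 2 ≤ n) (hu : Continuous u) {r : ℝ} (hr : 0 ≤ r) :
    ∃ x ∈ sphere (0 : Euc n) r, u x = sphMax u r :=
  ((isCompact_sphere (0 : Euc n) r).image hu).sSup_mem ((sphere_ne hn hr).image u)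

lemma le_sphMax (hu : Continuous u) {r : ℝ} {x : Euc n} (hx : x ∈ sphere (0 : Euc n) r) :
    u x ≤ sphMax u r :=
  le_csSup ((isCompact_sphere (0 : Euc n) r).image hu).bddAbove (mem_image_of_mem u hx)

lemma le_sphMax_ball (hn : 2 ≤ n) (hp : 1 < p) (hC₁ : 0 < C₁) (hα₁ : p - 1 ≤ α)
    (hA : StructCond A p C₁ C₂) (hbl : LocBdd b)
    (hq0 : ∀ x, 0 ≤ q x) (hg0 : ∀ t ∈ Set.Ici (0 : ℝ), 0 ≤ g t)
    (hu : ContDiff ℝ 1 u) (hu0 : ∀ x, 0 ≤ u x)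
    (hw : WeakPair (fun x => A x (gradient u x))
      (fun x => b x * ‖gradient u x‖ ^ α - q x * g (u x))) (R : ℝ) :
    ∀ x ∈ closedBall (0 : Euc n) R, u x ≤ sphMax u R := by
  have hcg := continuous_gradient hu
  have hga : Continuous fun x => ‖gradient u x‖ ^ (α - p + 1) :=
    hcg.norm.rpow_const fun x => Or.inr (by linarith)
  obtain ⟨D, hD⟩ := (isCompact_closedBall (0 : Euc n) R).exists_bound_of_continuousOn hga.continuousOn
  obtain ⟨Cb, hCb⟩ := hbl _ (isCompact_closedBall (0 : Euc n) R)
  refine max_princ hn hw hu hp hC₁ (B := |Cb| * |D|) (by positivity)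
    (fun x => by rw [real_inner_comm]; exact (hA.2 x _).1) ?_ (fun x hx => le_sphMax hu.continuous hx)
  intro x hx
  have hx' := ball_subset_closedBall hx
  have h1 : ‖gradient u x‖ ^ α = ‖gradient u x‖ ^ (α - p + 1) * ‖gradient u x‖ ^ (p - 1) := by
    rw [← Real.rpow_add_of_nonneg (norm_nonneg _) (by linarith) (by linarith)]
    congr 1; ring
  have h2 : 0 ≤ q x * g (u x) := mul_nonneg (hq0 x) (hg0 _ (hu0 x))
  have h3 : b x * ‖gradient u x‖ ^ (α - p + 1) ≤ |Cb| * |D| :=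
    mul_le_mul ((hCb x hx').trans (le_abs_self _))
      ((le_abs_self _).trans ((hD x hx').trans (le_abs_self _))) (by positivity) (by positivity)
  have h4 := mul_le_mul_of_nonneg_right h3 (show 0 ≤ ‖gradient u x‖ ^ (p-1) by positivity)
  show b x * ‖gradient u x‖ ^ α - q x * g (u x) ≤ _
  rw [h1]
  linarith

end sol

lemma pigeon (M : ℕ → ℝ) (N : ℕ) (hN : 0 < N) :
    ∃ i < N, M (i + 1) - M i ≤ (M N - M 0) / N := by
  by_contra hcon
  push Not at hcon
  have hN' : (0:ℝ) < N := by exact_mod_cast hN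
  have h1 : ∑ i ∈ Finset.range N, (M N - M 0) / N < ∑ i ∈ Finset.range N, (M (i+1) - M i) :=
    Finset.sum_lt_sum_of_nonempty (Finset.nonempty_range_iff.2 hN.ne')
      fun i hi => hcon i (Finset.mem_range.1 hi)
  rw [Finset.sum_range_sub, Finset.sum_const, Finset.card_range, nsmul_eq_mul,
    mul_div_cancel₀ _ hN'.ne'] at h1
  exact lt_irrefl _ h1

lemma young3 {p α T a : ℝ} (hT : 0 < T) (ha : 0 ≤ a) (hα0 : 0 ≤ α) (hα : α ≤ p) :
    a ^ α ≤ T ^ α + T ^ (α - p) * a ^ p := by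
  rcases le_total a T with h | h
  · have h1 : a ^ α ≤ T ^ α := Real.rpow_le_rpow ha h hα0
    have : 0 ≤ T ^ (α - p) * a ^ p := by positivity
    linarith
  · have ha' : 0 < a := hT.trans_le h
    have h1 : a ^ (α - p) ≤ T ^ (α - p) := Real.rpow_le_rpow_of_nonpos hT h (by linarith)
    have h2 := mul_le_mul_of_nonneg_right h1 (show 0 ≤ a ^ p by positivity)
    rw [← Real.rpow_add ha', sub_add_cancel] at h2
    have : 0 ≤ T ^ α := by positivity
    linarith
set_option maxHeartbeats 1000000 in
/-- Lemma 3.2: bound from below for the growth of `M(r;u)` when the `b`-term is large. -/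
theorem stmt_5 (n : ℕ) (hn : 2 ≤ n) (p C₁ C₂ α : ℝ) (hp : 1 < p)
    (hC₁ : 0 < C₁) (hC₂ : 0 < C₂) (hα₁ : p - 1 ≤ α) (hα₂ : α ≤ p)
    (β lam : ℝ) (hβ0 : 0 < β) (hβ1 : β < 1) (hlam : 0 < lam) :
    ∃ C : ℝ, 0 < C ∧
      ∀ (A : Euc n → Euc n → Euc n), StructCond A p C₁ C₂ →
      ∀ (b : Euc n → ℝ), Measurable b → (∀ x, 0 ≤ b x) → LocBdd b →
      ∀ (q : Euc n → ℝ), Measurable q → (∀ x, 0 ≤ q x) → LocBdd q →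
      ∀ (g : ℝ → ℝ), ContinuousOn g (Set.Ici 0) → (∀ t ∈ Set.Ici (0 : ℝ), 0 ≤ g t) →
        (∀ t : ℝ, 0 < t → 0 < g t) →
      ∀ u : Euc n → ℝ, ContDiff ℝ 1 u → (∀ x, 0 ≤ u x) →
        IsWeakSol A b α (fun x => q x * g (u x)) Set.univ u →
      ∀ r₁ r₂ : ℝ, 0 < r₁ → r₁ < r₂ →
        sphMax u r₁ < sphMax u r₂ → β * sphMax u r₂ ≤ sphMax u r₁ →
        lam ≤ (sphMax u r₂ - sphMax u r₁) ^ (α - p + 1) * (r₂ - r₁) ^ (p - α) *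
            essSup b (volume.restrict (Ann n r₁ r₂)) →
        C * (r₂ - r₁) ^ α * essInf q (volume.restrict (Ann n r₁ r₂)) *
            sInf (g '' Set.Ioo (β * sphMax u r₁) (sphMax u r₂)) ≤
          (sphMax u r₂ - sphMax u r₁) ^ α * essSup b (volume.restrict (Ann n r₁ r₂)) := by
  obtain ⟨ε, hε, hloc⟩ := local_lemma n hn p C₁ C₂ β hC₁ hC₂ hβ0
  set l := min (lam * (β / 2)) (C₁ / 4) with hl
  have hl0 : 0 < l := lt_min (by positivity) (by linarith)
  refine ⟨min (1 / 2) (ε * l / 4), lt_min (by norm_num) (by positivity), ?_⟩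
  intro A hA b hbm hb0 hbl q hqm hq0 hql g hg hg0 hgpos u hu hu0 hsol r₁ r₂ hr₁ hr hM hβM hX
  have hw := weakPair_of_sol hp hα₁ hA hbm hb0 hbl hqm hq0 hql hg hu hu0 hsol
  have hmax := le_sphMax_ball hn hp hC₁ hα₁ hA hbl hq0 hg0 hu hu0 hw
  have huc := hu.continuous
  have hmono : ∀ r s, 0 ≤ r → r ≤ s → sphMax u r ≤ sphMax u s := by
    intro r s h0 hrs
    obtain ⟨x, hx, hxe⟩ := sphMax_attained hn huc h0
    rw [← hxe]
    exact hmax s x (closedBall_subset_closedBall hrs (sphere_subset_closedBall hx))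
  set C := min (1 / 2) (ε * l / 4) with hC
  have hC0 : 0 < C := lt_min (by norm_num) (by positivity)
  set M₁ := sphMax u r₁ with hM₁
  set M₂ := sphMax u r₂ with hM₂
  set B := essSup b (volume.restrict (Ann n r₁ r₂)) with hB
  set Q := essInf q (volume.restrict (Ann n r₁ r₂)) with hQ
  set G := sInf (g '' Set.Ioo (β * M₁) M₂) with hG
  have hM₁0 : 0 ≤ M₁ := by
    obtain ⟨x, hx, hxe⟩ := sphMax_attained hn huc hr₁.le
    rw [hM₁, ← hxe]; exact hu0 x
  have hM₂0 : 0 < M₂ := by linarith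
  have hM₁p : 0 < M₁ := (mul_pos hβ0 hM₂0).trans_le hβM
  by_contra hcon
  push Not at hcon
  set m := M₂ - M₁ with hm
  have hm0 : 0 < m := by linarith
  set ρ := r₂ - r₁ with hρ
  have hρ0 : 0 < ρ := by linarith
  set T := m / ρ with hT
  have hT0 : 0 < T := by positivity
  have hmT : m = T * ρ := by rw [hT]; field_simp
  have hα0 : 0 ≤ α := by linarith
  have hX' : lam ≤ ρ * T ^ (α - p + 1) * B := by
    have : m ^ (α - p + 1) * ρ ^ (p - α) = ρ * T ^ (α - p + 1) := by
      rw [hmT, Real.mul_rpow hT0.le hρ0.le, mul_assoc, ← Real.rpow_add hρ0,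
        show α - p + 1 + (p - α) = 1 by ring, Real.rpow_one, mul_comm]
    rwa [this] at hX
  have hc1 : T ^ α * B < C * (Q * G) := by
    rw [hmT, Real.mul_rpow hT0.le hρ0.le] at hcon
    have hρα : 0 < ρ ^ α := by positivity
    have : ρ ^ α * (T ^ α * B) < ρ ^ α * (C * (Q * G)) := by linarith
    exact lt_of_mul_lt_mul_left this hρα.le
  have hTa : 0 < T ^ (α - p + 1) := by positivity
  have hB0 : 0 < B := by
    by_contra hneg
    have : ρ * T ^ (α - p + 1) * B ≤ 0 :=
      mul_nonpos_of_nonneg_of_nonpos (by positivity) (not_lt.1 hneg)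
    linarith
  set X := ρ * T ^ (α - p + 1) * B with hXd
  have hllam : l ≤ lam * (β / 2) := min_le_left _ _
  have hlX : l ≤ X := by
    have : lam * (β / 2) ≤ lam * 1 := mul_le_mul_of_nonneg_left (by linarith) hlam.le
    linarith
  have hX0 : 0 < X := hl0.trans_le hlX
  set N := ⌈X / l⌉₊ with hN
  have hN0 : 0 < N := Nat.ceil_pos.2 (by positivity)
  have hN0' : (0:ℝ) < N := by exact_mod_cast hN0
  have hN1 : X ≤ N * l := by
    have := Nat.le_ceil (X / l)
    rwa [div_le_iff₀ hl0] at this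
  have hN2 : N * l ≤ 2 * X := by
    have h1 := Nat.ceil_lt_add_one (show 0 ≤ X / l by positivity)
    have h2 : (N:ℝ) * l < (X / l + 1) * l := mul_lt_mul_of_pos_right h1 hl0
    have h3 : (X / l + 1) * l = X + l := by field_simp
    linarith
  set h := ρ / N with hh
  have hh0 : 0 < h := by positivity
  have hNh : N * h = ρ := by rw [hh]; field_simp
  have hhX : N * (h * T ^ (α - p + 1) * B) = X := by rw [hXd, ← hNh]; ring
  have hh1 : h * T ^ (α - p + 1) * B ≤ l :=
    le_of_mul_le_mul_left (by linarith) hN0'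
  have hh2 : l / 2 ≤ h * T ^ (α - p + 1) * B :=
    le_of_mul_le_mul_left (by linarith) hN0'
  obtain ⟨i, hiN, hi⟩ := pigeon (fun i => sphMax u (r₁ + i * h)) N hN0
  have hiN' : (i:ℝ) + 1 ≤ N := by exact_mod_cast hiN
  simp only [Nat.cast_zero, zero_mul, add_zero, hNh] at hi
  rw [show r₁ + ρ = r₂ by rw [hρ]; ring, ← hM₁, ← hM₂, ← hm] at hi
  have hmN : m / N = T * h := by rw [hmT, hh]; ring
  rw [hmN] at hi
  push_cast at hi
  set r := r₁ + i * h with hrd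
  have hrr : r₁ + (i + 1) * h = r + h := by rw [hrd]; ring
  rw [hrr] at hi
  have hr0 : r₁ ≤ r := by
    have : 0 ≤ (i:ℝ) * h := by positivity
    linarith
  have hrh : r + h ≤ r₂ := by
    have := mul_le_mul_of_nonneg_right hiN' hh0.le
    rw [hNh] at this
    linarith
  set Mb := sphMax u (r + h) with hMb
  have hMb1 : M₁ ≤ Mb := hmono _ _ hr₁.le (by linarith)
  have hMb2 : Mb ≤ M₂ := hmono _ _ (by linarith) hrh
  obtain ⟨x₀, hx₀, hux₀⟩ := sphMax_attained hn huc (show 0 ≤ r + h / 2 by linarith)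
  have hx₀n : ‖x₀‖ = r + h / 2 := mem_sphere_zero_iff_norm.1 hx₀
  have hcen : Mb - T * h ≤ u x₀ := by
    have := hmono r (r + h/2) (by linarith) (by linarith)
    rw [hux₀]; linarith
  have hup : ∀ x ∈ closedBall x₀ (h/2), u x ≤ Mb := by
    intro x hx
    refine hmax (r + h) x ?_
    rw [mem_closedBall, dist_eq_norm] at hx
    rw [mem_closedBall_zero_iff]
    have := norm_le_norm_add_norm_sub' x x₀
    linarith
  have hsub : ball x₀ (h/2) ⊆ Ann n r₁ r₂ := by
    intro x hx
    rw [mem_ball, dist_eq_norm] at hx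
    have h1 := norm_le_norm_add_norm_sub' x x₀
    have h2 := norm_le_norm_add_norm_sub x x₀
    constructor
    · linarith
    · linarith
  have hAsub : Ann n r₁ r₂ ⊆ closedBall (0 : Euc n) r₂ := by
    intro x hx
    rw [mem_closedBall_zero_iff]
    exact hx.2.le
  have hAm : MeasurableSet (Ann n r₁ r₂) :=
    ((isOpen_lt continuous_const continuous_norm).inter
      (isOpen_lt continuous_norm continuous_const)).measurableSet
  have hbB : ∀ᵐ x ∂(volume.restrict (ball x₀ (h/2))), b x ≤ B := by
    obtain ⟨Cb, hCb⟩ := hbl _ (isCompact_closedBall (0 : Euc n) r₂)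
    have : IsBoundedUnder (· ≤ ·) (ae (volume.restrict (Ann n r₁ r₂))) b :=
      ⟨Cb, by
        rw [eventually_map]
        filter_upwards [ae_restrict_mem hAm] with x hx using hCb x (hAsub hx)⟩
    exact ae_restrict_of_ae_restrict_of_subset hsub (ae_le_essSup this)
  have hqQ : ∀ᵐ x ∂(volume.restrict (ball x₀ (h/2))), Q ≤ q x := by
    have : IsBoundedUnder (· ≥ ·) (ae (volume.restrict (Ann n r₁ r₂))) q :=
      ⟨0, by rw [eventually_map]; exact Eventually.of_forall hq0⟩
    exact ae_restrict_of_ae_restrict_of_subset hsub (ae_essInf_le this)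
  have hβM₁ : 0 < β * M₁ := mul_pos hβ0 hM₁p
  have hβM₁lt : β * M₁ < M₂ := (mul_le_of_le_one_left hM₁0 hβ1.le).trans_lt hM
  have hGlow : ∀ t ∈ Set.Ioo (β * M₁) M₂, G ≤ g t := fun t ht =>
    csInf_le ⟨0, by rintro _ ⟨s, hs, rfl⟩; exact hg0 s (hβM₁.trans hs.1).le⟩ (mem_image_of_mem g ht)
  have hGlow' : ∀ t ∈ Set.Ioc (β * M₁) M₂, G ≤ g t := by
    intro t ht
    have h1 : t ∈ closure (Set.Ioo (β * M₁) M₂) := by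
      rw [closure_Ioo hβM₁lt.ne]; exact ⟨ht.1.le, ht.2⟩
    have h2 : ContinuousWithinAt g (Set.Ioo (β * M₁) M₂) t :=
      (hg t (hβM₁.trans ht.1).le).mono fun s hs => (hβM₁.trans hs.1).le
    have h3 := h2.mem_closure_image h1
    have h4 : closure (g '' Set.Ioo (β * M₁) M₂) ⊆ Set.Ici G := by
      refine closure_minimal ?_ isClosed_Ici
      rintro _ ⟨s, hs, rfl⟩
      exact hGlow s hs
    exact h4 h3
  have hG0 : 0 ≤ G := Real.sInf_nonneg (by
    rintro _ ⟨s, hs, rfl⟩; exact hg0 s (hβM₁.trans hs.1).le)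
  have hTαB : 0 < T ^ α * B := by positivity
  have hQG : 0 < Q * G := by
    by_contra hneg
    have := mul_nonpos_of_nonneg_of_nonpos hC0.le (not_lt.1 hneg)
    linarith
  have hTh0 : 0 < T * h := by positivity
  have hNβ : 2 ≤ N * β := by
    have h1 : (N:ℝ) * l ≤ N * (lam * (β / 2)) := mul_le_mul_of_nonneg_left hllam hN0'.le
    have h2 : lam * 2 ≤ lam * (N * β) := by linarith
    exact le_of_mul_le_mul_left h2 hlam
  have hTh : 2 * (T * h) ≤ β * m := by
    have h1 := mul_le_mul_of_nonneg_right hNβ hTh0.le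
    have h2 : N * β * (T * h) = β * m := by rw [hmT, ← hNh]; ring
    linarith
  have hTαh : T ^ α * B * h = T ^ (p - 1) * (h * T ^ (α - p + 1) * B) := by
    have : T ^ α = T ^ (p - 1) * T ^ (α - p + 1) := by
      rw [← Real.rpow_add hT0]; congr 1; ring
    rw [this]; ring
  have hTp : 0 < T ^ (p - 1) := by positivity
  refine hloc (fun x => A x (gradient u x)) (fun x => b x * ‖gradient u x‖ ^ α - q x * g (u x)) u x₀
    T h Mb (Q * G / 2) (B * T ^ (α - p)) ⟨hw, hu, hT0, hh0, by linarith, hp, hC₁, hC₂, hβ0, hβ1,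
      by positivity, fun x => by rw [real_inner_comm]; exact (hA.2 x _).1, fun x => (hA.2 x _).2,
      hup, hcen, ?_, ?_⟩ ?_
  · filter_upwards [hbB, hqQ, ae_restrict_mem measurableSet_ball] with x hxb hxq hx hux
    have hu2 : u x ≤ M₂ := (hup x (ball_subset_closedBall hx)).trans hMb2
    have hu1 : β * M₁ < u x := by
      have h1 : β * m ≤ (1 - β) * M₁ := by rw [hm]; linarith
      have h3 : β * (T * h) ≤ T * h := mul_le_of_le_one_left hTh0.le hβ1.le
      linarith
    have hgx := hGlow' (u x) ⟨hu1, hu2⟩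
    have e1 : Q * G ≤ q x * g (u x) :=
      (mul_le_mul_of_nonneg_right hxq hG0).trans (mul_le_mul_of_nonneg_left hgx (hq0 x))
    have e2 := young3 hT0 (norm_nonneg (gradient u x)) hα0 hα₂
    have e3 : b x * ‖gradient u x‖ ^ α ≤ B * (T ^ α + T ^ (α - p) * ‖gradient u x‖ ^ p) :=
      mul_le_mul hxb e2 (by positivity) hB0.le
    have e4 : C * (Q * G) ≤ 1 / 2 * (Q * G) := mul_le_mul_of_nonneg_right (min_le_left _ _) hQG.le
    linarith
  · have : B * T ^ (α - p) * (2 * (T * h)) = 2 * (h * T ^ (α - p + 1) * B) := by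
      rw [Real.rpow_add_one hT0.ne']; ring
    rw [this]
    have : l ≤ C₁ / 4 := min_le_right _ _
    linarith
  · have e1 : T ^ (p - 1) * (l / 2) ≤ C * (Q * G) * h := by
      have := mul_le_mul_of_nonneg_left hh2 hTp.le
      rw [← hTαh] at this
      exact this.trans (mul_le_mul_of_nonneg_right hc1.le hh0.le)
    have e2 : C * (Q * G) * h ≤ ε * l / 4 * (Q * G) * h := by
      have : C ≤ ε * l / 4 := min_le_right _ _
      gcongr
    have e3 : T ^ (p - 1) * (l / 2) ≤ (ε * (Q * G / 2) * h) * (l / 2) := by linarith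
    exact le_of_mul_le_mul_right e3 (by linarith)
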